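/- For the preprojective algebra A₁ = KQ/I′ of type D₄ over an algebraically closed field K of characteristic 2, the second Hochschild cohomology group HH²(A₁) is a K-vector space of dimension 3. -/

import Mathlib

/-!  The quiver `Q` of type `D₄`: vertices `1, 2, 3, 4` and arrows
`α : 1 → 4`, `β : 4 → 1`, `γ : 3 → 4`, `δ : 4 → 3`, `ε : 4 → 2`, `ξ : 2 → 4`.
The path algebra `KQ` is presented as the quotient of the free algebra on the
four vertex idempotents `e1, e2, e3, e4` and the six arrows, by the standard
path-algebra relations (orthogonal idempotents summing to `1`, and each arrow
`a : v → w` satisfying `e_v * a = a = a * e_w`, paths being written from left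
to right). -/

/-- Generators of the path algebra: the four vertices and the six arrows. -/
inductive QGen : Type
  | e1 | e2 | e3 | e4 | α | β | γ | δ | ε | ξ
  deriving DecidableEq

namespace PathAlgD4

open QGen

/-- The source vertex of each arrow. -/
def src : QGen → QGen
  | .α => .e1 | .β => .e4 | .γ => .e3 | .δ => .e4 | .ε => .e4 | .ξ => .e2
  | v => v

/-- The target vertex of each arrow. -/
def tgt : QGen → QGen
  | .α => .e4 | .β => .e1 | .γ => .e4 | .δ => .e3 | .ε => .e2 | .ξ => .e4
  | v => v

/-- The generator `g` is a vertex. -/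
def IsVertex (g : QGen) : Prop := g = .e1 ∨ g = .e2 ∨ g = .e3 ∨ g = .e4

/-- The generator `g` is an arrow. -/
def IsArrow (g : QGen) : Prop := g = .α ∨ g = .β ∨ g = .γ ∨ g = .δ ∨ g = .ε ∨ g = .ξ

variable (K : Type) [Field K]

/-- The defining relations of the path algebra of the quiver `Q`, as a quotient
of the free algebra on the vertices and arrows. -/
inductive PathRel : FreeAlgebra K QGen → FreeAlgebra K QGen → Prop
  | vertex_mul (v w : QGen) (hv : IsVertex v) (hw : IsVertex w) :
      PathRel (FreeAlgebra.ι K v * FreeAlgebra.ι K w)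
        (if v = w then FreeAlgebra.ι K v else 0)
  | vertex_sum :
      PathRel (FreeAlgebra.ι K .e1 + FreeAlgebra.ι K .e2 +
        FreeAlgebra.ι K .e3 + FreeAlgebra.ι K .e4) 1
  | src_mul (a : QGen) (ha : IsArrow a) :
      PathRel (FreeAlgebra.ι K (src a) * FreeAlgebra.ι K a) (FreeAlgebra.ι K a)
  | mul_tgt (a : QGen) (ha : IsArrow a) :
      PathRel (FreeAlgebra.ι K a * FreeAlgebra.ι K (tgt a)) (FreeAlgebra.ι K a)
  | orth_mul (v a : QGen) (hv : IsVertex v) (ha : IsArrow a) (h : v ≠ src a) :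
      PathRel (FreeAlgebra.ι K v * FreeAlgebra.ι K a) 0
  | mul_orth (a v : QGen) (ha : IsArrow a) (hv : IsVertex v) (h : v ≠ tgt a) :
      PathRel (FreeAlgebra.ι K a * FreeAlgebra.ι K v) 0

/-- The path algebra `KQ` of the quiver `Q` over `K`. -/
abbrev PathAlg : Type := RingQuot (PathRel K)

/-- The image in the path algebra `KQ` of a generator (vertex or arrow). -/
noncomputable def gen (g : QGen) : PathAlg K :=
  RingQuot.mkAlgHom K (PathRel K) (FreeAlgebra.ι K g)


open scoped TensorProduct
open CategoryTheory

variable (K : Type) [Field K]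

/-- The two-sided ideal `I′` of `KQ` generated by `αβ, ξε, γδ, βα + δγ + εξ`
(paths written from left to right). -/
noncomputable def idealA1 : TwoSidedIdeal (PathAlg K) :=
  TwoSidedIdeal.span
    {gen K .α * gen K .β,
     gen K .ξ * gen K .ε,
     gen K .γ * gen K .δ,
     gen K .β * gen K .α + gen K .δ * gen K .γ + gen K .ε * gen K .ξ}

/-- The preprojective algebra `A₁ = KQ/I′` of type `D₄`. -/
abbrev AlgA1 : Type := (idealA1 K).ringCon.Quotient

noncomputable instance : Algebra K (AlgA1 K) :=
  Algebra.mk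
    (show K →+* AlgA1 K from
      (RingCon.mk' (idealA1 K).ringCon).comp (algebraMap K (PathAlg K)))
    (fun k x => by
      induction x using Quotient.ind'
      exact congrArg Quotient.mk'' (Algebra.commutes k _))
    (fun k x => by
      induction x using Quotient.ind'
      exact congrArg Quotient.mk'' (Algebra.smul_def k _))

/-- The second Hochschild cohomology group `HH²(Λ) = Ext²_{Λ ⊗[K] Λᵐᵒᵖ}(Λ, Λ)` of a
`K`-algebra `Λ`, as a `K`-vector space; `Λ` is regarded as a module over its enveloping
algebra `Λ ⊗[K] Λᵐᵒᵖ` via `(a ⊗ bᵒᵖ) • m = a * m * b`. -/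
noncomputable def HH2 (A : Type) [Ring A] [Algebra K A] : ModuleCat K :=
  letI : Module (A ⊗[K] Aᵐᵒᵖ) A := TensorProduct.Algebra.module
  ((Ext K (ModuleCat (A ⊗[K] Aᵐᵒᵖ)) 2).obj
    (Opposite.op (ModuleCat.of (A ⊗[K] Aᵐᵒᵖ) A))).obj (ModuleCat.of (A ⊗[K] Aᵐᵒᵖ) A)

open CategoryTheory Limits

theorem sc_finrank {K : Type} [Field K] (S : ShortComplex (ModuleCat.{0} K))
    {V : Type} [AddCommGroup V] [Module K V] (θ : S.X₂ →ₗ[K] V)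
    (hs : ∀ v, ∃ f : S.X₂, S.g.hom f = 0 ∧ θ f = v)
    (hk : ∀ f : S.X₂, S.g.hom f = 0 → (θ f = 0 ↔ ∃ h : S.X₁, S.f.hom h = f)) :
    Module.finrank K S.homology = Module.finrank K V := by
  let e := S.moduleCatHomologyIso.toLinearEquiv
  rw [e.finrank_eq]
  let θ' : LinearMap.ker S.g.hom →ₗ[K] V := θ.comp (LinearMap.ker S.g.hom).subtype
  have h1 : Function.Surjective θ' := by
    intro v
    obtain ⟨f, hf, rfl⟩ := hs v
    exact ⟨⟨f, hf⟩, rfl⟩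
  have h2 : LinearMap.ker θ' = LinearMap.range S.moduleCatToCycles := by
    ext ⟨f, hf⟩
    constructor
    · intro h
      obtain ⟨x, hx⟩ := (hk f hf).1 h
      exact ⟨x, Subtype.ext hx⟩
    · rintro ⟨x, hx⟩
      exact (hk f hf).2 ⟨x, congrArg Subtype.val hx⟩
  change Module.finrank K (_ ⧸ LinearMap.range S.moduleCatToCycles) = _
  rw [← h2]
  exact (θ'.quotKerEquivOfSurjective h1).finrank_eq

section
variable {C : Type 1} [Category.{0} C] [Abelian C] [EnoughProjectives C]
variable {Z X₀ X₁ X₂ : C} (p : X₀ ⟶ Z) (d₀ : X₁ ⟶ X₀) (d₁ : X₂ ⟶ X₁) (w0 : d₀ ≫ p = 0)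
  (w : d₁ ≫ d₀ = 0)

lemma exact_cov {X Y : C} (f : X ⟶ Y) (h : (Projective.π (kernel f) ≫ kernel.ι f) ≫ f = 0) :
    (ShortComplex.mk (Projective.π (kernel f) ≫ kernel.ι f) f h).Exact := exact_d_f f

noncomputable def resAux : ℕ → ShortComplex C :=
  ChainComplex.mkAux X₀ X₁ X₂ d₀ d₁ w
    (fun S => ⟨Projective.over (kernel S.f), Projective.π (kernel S.f) ≫ kernel.ι S.f,
    (Category.assoc _ _ _).trans ((congrArg _ (kernel.condition _)).trans comp_zero)⟩)

noncomputable def resCx : ChainComplex C ℕ :=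
  ChainComplex.of (fun n => (resAux d₀ d₁ w n).X₃) (fun n => (resAux d₀ d₁ w n).g)
    fun n => (resAux d₀ d₁ w n).zero

lemma resCx_d (n : ℕ) : (resCx d₀ d₁ w).d (n+1) n = (resAux d₀ d₁ w n).g :=
  ChainComplex.of_d (fun n => (resAux d₀ d₁ w n).X₃) (fun n => (resAux d₀ d₁ w n).g) n

lemma resAux_exact (hex : (ShortComplex.mk d₁ d₀ w).Exact) (n : ℕ) :
    (resAux d₀ d₁ w n).Exact := by
  cases n with
  | zero => exact hex
  | succ n => exact exact_cov _ _

lemma resCx_exact (hex : (ShortComplex.mk d₁ d₀ w).Exact) (n : ℕ) :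
    (resCx d₀ d₁ w).ExactAt (n + 1) := by
  rw [HomologicalComplex.exactAt_iff' _ (n + 1 + 1) (n + 1) n (by simp) (by simp)]
  have h := resAux_exact d₀ d₁ w hex n
  have e : (resCx d₀ d₁ w).sc' (n+1+1) (n+1) n = resAux d₀ d₁ w n := by
    change ShortComplex.mk ((resCx d₀ d₁ w).d (n+1+1) (n+1)) ((resCx d₀ d₁ w).d (n+1) n) _ = _
    simp only [resCx_d]
    rfl
  rw [e]
  exact h

lemma resCx_proj [h0 : Projective X₀] [h1 : Projective X₁] [h2 : Projective X₂] (n : ℕ) :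
    Projective ((resCx d₀ d₁ w).X n) := by
  obtain (_ | _ | _ | n) := n
  · exact h0
  · exact h1
  · exact h2
  · exact Projective.projective_over _

noncomputable def resRes [Projective X₀] [Projective X₁] [Projective X₂] [Epi p]
    (hex0 : (ShortComplex.mk d₀ p w0).Exact)
    (hex : (ShortComplex.mk d₁ d₀ w).Exact) : ProjectiveResolution Z where
  complex := resCx d₀ d₁ w
  projective := resCx_proj d₀ d₁ w
  π := (ChainComplex.toSingle₀Equiv _ _).symm ⟨p, (congrArg (· ≫ p) (resCx_d d₀ d₁ w 0)).trans w0⟩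
  quasiIso := ⟨fun n => by
    cases n
    · rw [ChainComplex.quasiIsoAt₀_iff, ShortComplex.quasiIso_iff_of_zeros']
      · refine (ShortComplex.exact_and_epi_g_iff_of_iso ?_).2
          ⟨hex0, ‹Epi p›⟩
        refine ShortComplex.isoMk (Iso.refl _) (Iso.refl _) (Iso.refl _) ?_ ?_
        · have := resCx_d d₀ d₁ w 0
          change 𝟙 _ ≫ d₀ = (resCx d₀ d₁ w).d 1 0 ≫ 𝟙 _
          rw [this]
          exact (Category.id_comp _).trans (Category.comp_id _).symm
        · change 𝟙 _ ≫ p = ((ChainComplex.toSingle₀Equiv (resCx d₀ d₁ w) Z).symm _).f 0 ≫ 𝟙 _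
          have h := ChainComplex.toSingle₀Equiv_symm_apply_f_zero (C := resCx d₀ d₁ w) (X := Z) p
            ((congrArg (· ≫ p) (resCx_d d₀ d₁ w 0)).trans w0)
          exact (Category.id_comp _).trans (h.symm.trans (Category.comp_id _).symm)
      all_goals rfl
    · rw [quasiIsoAt_iff_exactAt']
      · apply resCx_exact _ _ _ hex
      · apply ChainComplex.exactAt_succ_single_obj⟩

end

theorem ext2_finrank {K : Type} [Field K] {C : Type 1} [Category.{0} C] [Abelian C] [Linear K C]
    [EnoughProjectives C]
    {Z Y X₀ X₁ X₂ : C} (p : X₀ ⟶ Z) (d₀ : X₁ ⟶ X₀) (d₁ : X₂ ⟶ X₁) (w0 : d₀ ≫ p = 0) (w : d₁ ≫ d₀ = 0)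
    [Projective X₀] [Projective X₁] [Projective X₂] [Epi p]
    (hex0 : (ShortComplex.mk d₀ p w0).Exact)
    (hex : (ShortComplex.mk d₁ d₀ w).Exact)
    {V : Type} [AddCommGroup V] [Module K V] (θ : (X₂ ⟶ Y) →ₗ[K] V)
    (hs : ∀ v, ∃ f : X₂ ⟶ Y, kernel.ι d₁ ≫ f = 0 ∧ θ f = v)
    (hk : ∀ f : X₂ ⟶ Y, kernel.ι d₁ ≫ f = 0 → (θ f = 0 ↔ ∃ h : X₁ ⟶ Y, d₁ ≫ h = f)) :
    Module.finrank K (((Ext K C 2).obj (Opposite.op Z)).obj Y) = Module.finrank K V := by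
  let P := resRes p d₀ d₁ w0 w hex0 hex
  rw [(P.isoExt (R := K) 2 Y).toLinearEquiv.finrank_eq]
  let cx := P.complex.linearYonedaObj K Y
  have e := (ShortComplex.homologyMapIso (cx.isoSc' 1 2 3 (by simp) (by simp))).toLinearEquiv.finrank_eq
  refine e.trans ?_
  have hg : ∀ f : X₂ ⟶ Y, (cx.sc' 1 2 3).g.hom f = 0 ↔ kernel.ι d₁ ≫ f = 0 := by
    intro f
    have : (cx.sc' 1 2 3).g.hom f = (Projective.π (kernel d₁) ≫ kernel.ι d₁) ≫ f := by
      change P.complex.d 3 2 ≫ f = _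
      exact congrArg (· ≫ f) (resCx_d d₀ d₁ w 2)
    rw [this, Category.assoc]
    constructor
    · intro h
      rw [← cancel_epi (Projective.π (kernel d₁)), h, comp_zero]; rfl
    · intro h
      rw [h, comp_zero]; rfl
  have hf : ∀ f : X₁ ⟶ Y, (cx.sc' 1 2 3).f.hom f = d₁ ≫ f := by
    intro f
    change P.complex.d 2 1 ≫ f = _
    exact congrArg (· ≫ f) (resCx_d d₀ d₁ w 1)
  refine sc_finrank (cx.sc' 1 2 3) (V := V) θ ?_ ?_
  · intro v
    obtain ⟨f, h1, h2⟩ := hs v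
    exact ⟨f, (hg f).2 h1, h2⟩
  · intro f h
    refine (hk f ((hg f).1 h)).trans ?_
    constructor
    · rintro ⟨x, hx⟩
      exact ⟨x, (hf x).trans hx⟩
    · rintro ⟨x, hx⟩
      exact ⟨x, (hf x).symm.trans hx⟩

theorem ext2_finrank_mod {K R : Type} [Field K] [Ring R] [Algebra K R]
    {M N P₀ P₁ P₂ : Type} [AddCommGroup M] [Module R M] [AddCommGroup N] [Module R N]
    [AddCommGroup P₀] [Module R P₀] [AddCommGroup P₁] [Module R P₁] [AddCommGroup P₂] [Module R P₂]
    [Module.Projective R P₀] [Module.Projective R P₁] [Module.Projective R P₂]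
    (p : P₀ →ₗ[R] M) (d₁ : P₁ →ₗ[R] P₀) (d₂ : P₂ →ₗ[R] P₁)
    (hp : Function.Surjective p) (h1 : Function.Exact d₁ p) (h2 : Function.Exact d₂ d₁)
    {V : Type} [AddCommGroup V] [Module K V] (t : (P₂ →ₗ[R] N) →+ V)
    (ht : ∀ (k : K) (f g : P₂ →ₗ[R] N), (∀ x, g x = algebraMap K R k • f x) → t g = k • t f)
    (hs : ∀ v, ∃ f : P₂ →ₗ[R] N, (∀ x, d₂ x = 0 → f x = 0) ∧ t f = v)
    (hk : ∀ f : P₂ →ₗ[R] N, (∀ x, d₂ x = 0 → f x = 0) →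
      (t f = 0 ↔ ∃ h : P₁ →ₗ[R] N, h.comp d₂ = f)) :
    Module.finrank K (((Ext K (ModuleCat R) 2).obj (Opposite.op (ModuleCat.of R M))).obj
      (ModuleCat.of R N)) = Module.finrank K V := by
  have w0 : ModuleCat.ofHom d₁ ≫ ModuleCat.ofHom p = 0 := by
    ext x
    exact h1.apply_apply_eq_zero x
  have w1 : ModuleCat.ofHom d₂ ≫ ModuleCat.ofHom d₁ = 0 := by
    ext x
    exact h2.apply_apply_eq_zero x
  have : Epi (ModuleCat.ofHom p) := (ModuleCat.epi_iff_surjective _).2 hp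
  have : Projective (ModuleCat.of R P₀) := (IsProjective.iff_projective P₀).1 inferInstance
  have : Projective (ModuleCat.of R P₁) := (IsProjective.iff_projective P₁).1 inferInstance
  have : Projective (ModuleCat.of R P₂) := (IsProjective.iff_projective P₂).1 inferInstance
  let θ : (ModuleCat.of R P₂ ⟶ ModuleCat.of R N) →ₗ[K] V :=
    { toFun := fun f => t f.hom
      map_add' := fun f g => t.map_add _ _
      map_smul' := fun k f => ht k f.hom (k • f).hom (fun _ => rfl) }
  have hker : ∀ f : ModuleCat.of R P₂ ⟶ ModuleCat.of R N,
      kernel.ι (ModuleCat.ofHom d₂) ≫ f = 0 ↔ (∀ x, d₂ x = 0 → f.hom x = 0) := by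
    intro f
    constructor
    · intro h x hx
      let l : LinearMap.ker d₂ →ₗ[R] P₂ := (LinearMap.ker d₂).subtype
      have hl : ModuleCat.ofHom l ≫ ModuleCat.ofHom d₂ = 0 := by
        ext y
        exact y.2
      have h3 : ModuleCat.ofHom l ≫ f = 0 := by
        have e := kernel.lift_ι (ModuleCat.ofHom d₂) (ModuleCat.ofHom l) hl
        rw [← e, Category.assoc, h, comp_zero]
      exact congrArg (fun q => q.hom (⟨x, hx⟩ : LinearMap.ker d₂)) h3
    · intro h
      ext y
      refine h _ ?_
      exact congrArg (fun q => q.hom y) (kernel.condition (ModuleCat.ofHom d₂))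
  refine ext2_finrank (ModuleCat.ofHom p) (ModuleCat.ofHom d₁) (ModuleCat.ofHom d₂) w0 w1 ?_ ?_ θ ?_ ?_
  · exact (ShortComplex.moduleCat_exact_iff _).2 (fun x hx => (h1 x).1 hx)
  · exact (ShortComplex.moduleCat_exact_iff _).2 (fun x hx => (h2 x).1 hx)
  · intro v
    obtain ⟨f, hf, hv⟩ := hs v
    exact ⟨ModuleCat.ofHom f, (hker _).2 hf, hv⟩
  · intro f hf
    refine (hk f.hom ((hker f).1 hf)).trans ?_
    constructor
    · rintro ⟨h, hh⟩
      exact ⟨ModuleCat.ofHom h, ModuleCat.hom_ext hh⟩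
    · rintro ⟨h, hh⟩
      exact ⟨h.hom, congrArg ModuleCat.Hom.hom hh⟩


set_option linter.unusedSectionVars false
set_option linter.unusedSimpArgs false


/-! ### The algebra `A₁`: generators, relations, universal property -/

/-- The relations satisfied by the generators. -/
structure Rels {T : Type} [Ring T] (f : QGen → T) : Prop where
  vv : ∀ v w, IsVertex v → IsVertex w → f v * f w = if v = w then f v else 0
  one : f e1 + f e2 + f e3 + f e4 = 1
  sm : ∀ a, IsArrow a → f (src a) * f a = f a
  mt : ∀ a, IsArrow a → f a * f (tgt a) = f a
  om : ∀ v a, IsVertex v → IsArrow a → v ≠ src a → f v * f a = 0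
  mo : ∀ a v, IsArrow a → IsVertex v → v ≠ tgt a → f a * f v = 0
  r1 : f α * f β = 0
  r2 : f ξ * f ε = 0
  r3 : f γ * f δ = 0
  r4 : f β * f α + f δ * f γ + f ε * f ξ = 0

/-- the algebra `A₁`, with its ring structure packaged -/
def AA : Type := AlgA1 K

noncomputable instance : Ring (AA K) := inferInstanceAs (Ring (AlgA1 K))
noncomputable instance : Algebra K (AA K) := inferInstanceAs (Algebra K (AlgA1 K))

/-- The quotient map from the free algebra. -/
noncomputable def piA : PathAlg K →ₐ[K] AA K :=
  { RingCon.mk' (idealA1 K).ringCon with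
    commutes' := fun _ => rfl }

noncomputable def mkA : FreeAlgebra K QGen →ₐ[K] AA K :=
  (piA K).comp (RingQuot.mkAlgHom K (PathRel K))

lemma mkA_surj : Function.Surjective (mkA K) := by
  have h1 : Function.Surjective (piA K) := Quotient.mk''_surjective
  exact h1.comp (RingQuot.mkAlgHom_surjective K _)

/-- generators of `A₁` -/
noncomputable def g (a : QGen) : AA K := mkA K (FreeAlgebra.ι K a)

lemma piA_gen (a : QGen) : piA K (gen K a) = g K a := rfl

lemma mkA_rel {x y : FreeAlgebra K QGen} (h : PathRel K x y) : mkA K x = mkA K y :=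
  congrArg (piA K) (RingQuot.mkAlgHom_rel K h)

lemma piA_zero {x : PathAlg K} (h : x ∈ idealA1 K) : piA K x = 0 := by
  have h2 : (idealA1 K).ringCon x 0 := (TwoSidedIdeal.mem_iff _ _).1 h
  exact (RingCon.eq _).2 h2

lemma g_rels : Rels (g K) where
  vv v w hv hw := by
    have := mkA_rel K (PathRel.vertex_mul v w hv hw)
    rw [map_mul] at this
    rw [g, g, this]
    split_ifs <;> simp
  one := by
    have := mkA_rel K (PathRel.vertex_sum)
    simpa [g] using this
  sm a ha := by
    have := mkA_rel K (PathRel.src_mul a ha)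
    simpa [g] using this
  mt a ha := by
    have := mkA_rel K (PathRel.mul_tgt a ha)
    simpa [g] using this
  om v a hv ha h := by
    have := mkA_rel K (PathRel.orth_mul v a hv ha h)
    simpa [g] using this
  mo a v ha hv h := by
    have := mkA_rel K (PathRel.mul_orth a v ha hv h)
    simpa [g] using this
  r1 := by
    rw [← piA_gen, ← piA_gen, ← map_mul]
    exact piA_zero K (TwoSidedIdeal.subset_span (by simp))
  r2 := by
    rw [← piA_gen, ← piA_gen, ← map_mul]
    exact piA_zero K (TwoSidedIdeal.subset_span (by simp))
  r3 := by
    rw [← piA_gen, ← piA_gen, ← map_mul]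
    exact piA_zero K (TwoSidedIdeal.subset_span (by simp))
  r4 := by
    simp only [← piA_gen, ← map_mul, ← map_add]
    exact piA_zero K (TwoSidedIdeal.subset_span (by simp))

/-- algebra maps out of the path algebra -/
noncomputable def liftP {T : Type} [Ring T] [Algebra K T] (f : QGen → T) (hf : Rels f) :
    PathAlg K →ₐ[K] T :=
  RingQuot.liftAlgHom K ⟨FreeAlgebra.lift K f, by
    intro x y h
    cases h with
    | vertex_mul v w hv hw =>
      rw [map_mul, FreeAlgebra.lift_ι_apply, FreeAlgebra.lift_ι_apply, hf.vv v w hv hw]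
      split_ifs <;> simp
    | vertex_sum => simpa using hf.one
    | src_mul a ha => simpa using hf.sm a ha
    | mul_tgt a ha => simpa using hf.mt a ha
    | orth_mul v a hv ha h => simpa using hf.om v a hv ha h
    | mul_orth a v ha hv h => simpa using hf.mo a v ha hv h⟩

lemma liftP_gen {T : Type} [Ring T] [Algebra K T] (f : QGen → T) (hf : Rels f) (a : QGen) :
    liftP K f hf (gen K a) = f a := by
  rw [liftP, gen, RingQuot.liftAlgHom_mkAlgHom_apply, FreeAlgebra.lift_ι_apply]

lemma liftP_rel {T : Type} [Ring T] [Algebra K T] (f : QGen → T) (hf : Rels f) (x y : PathAlg K)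
    (h : (idealA1 K).ringCon x y) : liftP K f hf x = liftP K f hf y := by
  have h1 : idealA1 K ≤ TwoSidedIdeal.ker (liftP K f hf).toRingHom := by
    refine TwoSidedIdeal.span_le.2 ?_
    intro z hz
    rw [SetLike.mem_coe, TwoSidedIdeal.mem_ker]
    change liftP K f hf z = 0
    rcases hz with rfl | rfl | rfl | rfl
    · simpa [liftP_gen] using hf.r1
    · simpa [liftP_gen] using hf.r2
    · simpa [liftP_gen] using hf.r3
    · simpa [liftP_gen] using hf.r4
  have h2 : x - y ∈ idealA1 K := (TwoSidedIdeal.rel_iff _ _ _).1 h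
  have h3 := h1 h2
  rw [TwoSidedIdeal.mem_ker] at h3
  have h4 : liftP K f hf (x - y) = 0 := h3
  rwa [map_sub, sub_eq_zero] at h4

/-- algebra maps out of `A₁` -/
noncomputable def liftA {T : Type} [Ring T] [Algebra K T] (f : QGen → T) (hf : Rels f) :
    AA K →ₐ[K] T where
  toFun x := Quotient.liftOn' x (liftP K f hf) (liftP_rel K f hf)
  map_one' := map_one (liftP K f hf)
  map_zero' := map_zero (liftP K f hf)
  map_mul' x y := by
    induction x using Quotient.ind'
    induction y using Quotient.ind'
    exact map_mul (liftP K f hf) _ _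
  map_add' x y := by
    induction x using Quotient.ind'
    induction y using Quotient.ind'
    exact map_add (liftP K f hf) _ _
  commutes' r := (liftP K f hf).commutes r

lemma liftA_g {T : Type} [Ring T] [Algebra K T] (f : QGen → T) (hf : Rels f) (a : QGen) :
    liftA K f hf (g K a) = f a := liftP_gen K f hf a

lemma A_induction (p : AA K → Prop) (h1 : ∀ r, p (algebraMap K _ r)) (h2 : ∀ a, p (g K a))
    (h3 : ∀ x y, p x → p y → p (x * y)) (h4 : ∀ x y, p x → p y → p (x + y)) (x : AA K) : p x := by
  obtain ⟨y, rfl⟩ := mkA_surj K x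
  induction y using FreeAlgebra.induction with
  | grade0 r => rw [AlgHom.commutes]; exact h1 r
  | grade1 a => exact h2 a
  | mul a b ha hb => rw [map_mul]; exact h3 _ _ ha hb
  | add a b ha hb => rw [map_add]; exact h4 _ _ ha hb

lemma submodule_eq_top (S : Submodule K (AA K)) (h1 : 1 ∈ S)
    (h2 : ∀ a, ∀ x ∈ S, g K a * x ∈ S) : S = ⊤ := by
  rw [eq_top_iff]
  have key : ∀ x : AA K, ∀ y ∈ S, x * y ∈ S := by
    intro x
    refine A_induction K (fun x => ∀ y ∈ S, x * y ∈ S) ?_ h2 ?_ ?_ x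
    · intro r y hy
      rw [← Algebra.smul_def]
      exact S.smul_mem r hy
    · intro x y hx hy z hz
      rw [mul_assoc]
      exact hx _ (hy _ hz)
    · intro x y hx hy z hz
      rw [add_mul]
      exact S.add_mem (hx _ hz) (hy _ hz)
  intro x _
  simpa using key x 1 h1


/-! ### A basis of `A₁` -/

/-- left multiplication table of the generators on the 28 basis paths -/
def lmTbl : QGen → List (List (Fin 28))
  | .e1 => [[0], [], [], [], [4], [], [], [], [], [], [10], [11], [], [], [], [], [], [], [18], [], [], [], [], [], [24], [], [], []]
  | .e2 => [[], [1], [], [], [], [], [], [], [], [9], [], [], [], [], [14], [15], [], [], [], [], [20], [], [], [], [], [25], [], []]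
  | .e3 => [[], [], [2], [], [], [], [6], [], [], [], [], [], [12], [13], [], [], [], [], [], [19], [], [], [], [], [], [], [26], []]
  | .e4 => [[], [], [], [3], [], [5], [], [7], [8], [], [], [], [], [], [], [], [16], [17], [], [], [], [21], [22], [23], [], [], [], [27]]
  | .α => [[], [], [], [4], [], [], [], [10], [11], [], [], [], [], [], [], [], [], [18], [], [], [], [24], [], [], [], [], [], []]
  | .β => [[5], [], [], [], [16], [], [], [], [], [], [22], [23], [], [], [], [], [], [], [27], [], [], [], [], [], [], [], [], []]
  | .γ => [[], [], [], [6], [], [12], [], [], [13], [], [], [], [], [], [], [], [19], [], [], [], [], [], [26], [], [], [], [], []]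
  | .δ => [[], [], [7], [], [], [], [17], [], [], [], [], [], [21], [23], [], [], [], [], [], [27], [], [], [], [], [], [], [], []]
  | .ε => [[], [8], [], [], [], [], [], [], [], [16, 17], [], [], [], [], [21], [22], [], [], [], [], [27], [], [], [], [], [], [], []]
  | .ξ => [[], [], [], [9], [], [14], [], [15], [], [], [], [], [], [], [], [], [20], [20], [], [], [], [], [], [25], [], [], [], []]

def lm (a : QGen) (k : Fin 28) : List (Fin 28) := (lmTbl a).getD k []

/-- the 28 basis paths -/
def wordTbl : List (List QGen) :=
  [[.e1], [.e2], [.e3], [.e4], [.α], [.β], [.γ], [.δ], [.ε], [.ξ], [.α, .δ], [.α, .ε], [.γ, .β], [.γ, .ε], [.ξ, .β], [.ξ, .δ], [.β, .α], [.δ, .γ], [.α, .δ, .γ], [.γ, .β, .α], [.ξ, .β, .α], [.δ, .γ, .β], [.β, .α, .δ], [.β, .α, .ε], [.α, .δ, .γ, .β], [.ξ, .β, .α, .ε], [.γ, .β, .α, .δ], [.β, .α, .δ, .γ]]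

def word (k : Fin 28) : List QGen := wordTbl.getD k []

noncomputable def b (k : Fin 28) : AA K := ((word k).map (g K)).prod

noncomputable def bsum (l : List (Fin 28)) : AA K := (l.map (b K)).sum

instance : DecidablePred IsVertex := fun a => by unfold IsVertex; infer_instance
instance : DecidablePred IsArrow := fun a => by unfold IsArrow; infer_instance

lemma va (a : QGen) : IsVertex a ∨ IsArrow a := by cases a <;> decide

lemma src_of_vertex (v : QGen) (h : IsVertex v) : src v = v := by
  rcases h with rfl | rfl | rfl | rfl <;> rfl
lemma tgt_of_vertex (v : QGen) (h : IsVertex v) : tgt v = v := by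
  rcases h with rfl | rfl | rfl | rfl <;> rfl
lemma src_vertex (v : QGen) : IsVertex (src v) := by cases v <;> decide
lemma tgt_vertex (v : QGen) : IsVertex (tgt v) := by cases v <;> decide


lemma Rels.lv {T : Type} [Ring T] {f : QGen → T} (hf : Rels f) (a : QGen) : f (src a) * f a = f a := by
  rcases va a with h | h
  · rw [src_of_vertex a h, hf.vv a a h h, if_pos rfl]
  · exact hf.sm a h

lemma Rels.rv {T : Type} [Ring T] {f : QGen → T} (hf : Rels f) (a : QGen) : f a * f (tgt a) = f a := by
  rcases va a with h | h
  · rw [tgt_of_vertex a h, hf.vv a a h h, if_pos rfl]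
  · exact hf.mt a h

lemma Rels.nc {T : Type} [Ring T] {f : QGen → T} (hf : Rels f) (a c : QGen) (h : tgt a ≠ src c) : f a * f c = 0 := by
  rw [← hf.rv a, ← hf.lv c, mul_assoc, ← mul_assoc (f (tgt a)),
    hf.vv _ _ (tgt_vertex a) (src_vertex c), if_neg h, zero_mul, mul_zero]

lemma add_self' [CharP K 2] (x : AA K) : x + x = 0 := by
  have : (2 : K) • x = 0 := by
    rw [show (2 : K) = 0 from CharTwo.two_eq_zero, zero_smul]
  rwa [two_smul] at this

lemma eq_of_add_eq_zero' [CharP K 2] {x y : AA K} (h : x + y = 0) : x = y := by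
  have := add_self' K y
  rw [← this] at h
  exact add_right_cancel h

section Rules
set_option linter.unusedSectionVars false
set_option linter.unusedSimpArgs false
variable [CharP K 2]

lemma nc (a c : QGen) (h : tgt a ≠ src c) : g K a * g K c = 0 := (g_rels K).nc a c h
lemma nc' (a c : QGen) (h : tgt a ≠ src c) (z : AA K) : g K a * (g K c * z) = 0 := by
  rw [← mul_assoc, nc K a c h, zero_mul]
lemma lv (v a : QGen) (hv : v = src a) : g K v * g K a = g K a := by
  subst hv; exact (g_rels K).lv a
lemma lv' (v a : QGen) (hv : v = src a) (z : AA K) : g K v * (g K a * z) = g K a * z := by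
  rw [← mul_assoc, lv K v a hv]
lemma rv (a v : QGen) (hv : v = tgt a) : g K a * g K v = g K a := by
  subst hv; exact (g_rels K).rv a
lemma q1 : g K α * g K β = 0 := (g_rels K).r1
lemma q1' (z : AA K) : g K α * (g K β * z) = 0 := by rw [← mul_assoc, q1, zero_mul]
lemma q2 : g K ξ * g K ε = 0 := (g_rels K).r2
lemma q2' (z : AA K) : g K ξ * (g K ε * z) = 0 := by rw [← mul_assoc, q2, zero_mul]
lemma q3 : g K γ * g K δ = 0 := (g_rels K).r3
lemma q3' (z : AA K) : g K γ * (g K δ * z) = 0 := by rw [← mul_assoc, q3, zero_mul]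
lemma q4 : g K ε * g K ξ = g K β * g K α + g K δ * g K γ :=
  (eq_of_add_eq_zero' K (g_rels K).r4).symm
lemma q4' (z : AA K) : g K ε * (g K ξ * z) = g K β * (g K α * z) + g K δ * (g K γ * z) := by
  rw [← mul_assoc, q4, add_mul, mul_assoc, mul_assoc]
lemma q5' (z : AA K) : g K ξ * (g K δ * (g K γ * z)) = g K ξ * (g K β * (g K α * z)) := by
  have h := q2' K (g K ξ * z)
  rw [q4', mul_add] at h
  exact (eq_of_add_eq_zero' K h).symm
lemma q5 : g K ξ * (g K δ * g K γ) = g K ξ * (g K β * g K α) := by simpa using q5' K 1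
lemma q6 : g K δ * (g K γ * g K ε) = g K β * (g K α * g K ε) := by
  have h : g K ε * (g K ξ * g K ε) = 0 := by rw [q2, mul_zero]
  rw [q4'] at h
  exact (eq_of_add_eq_zero' K h).symm
lemma q6' (z : AA K) : g K δ * (g K γ * (g K ε * z)) = g K β * (g K α * (g K ε * z)) := by
  have := congrArg (· * z) (q6 K)
  simpa [mul_assoc] using this
lemma q7 : g K ξ * (g K β * (g K α * g K δ)) = 0 := by
  rw [← q5', q3, mul_zero, mul_zero]
lemma q7' (z : AA K) : g K ξ * (g K β * (g K α * (g K δ * z))) = 0 := by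
  rw [← q5', q3', mul_zero, mul_zero]
lemma q8 : g K γ * (g K β * (g K α * g K ε)) = 0 := by
  rw [← q6, q3']
lemma q9' (z : AA K) :
    g K δ * (g K γ * (g K β * (g K α * z))) = g K β * (g K α * (g K δ * (g K γ * z))) := by
  have h : ∀ x : AA K, (g K β * g K α + g K δ * g K γ) * ((g K β * g K α + g K δ * g K γ) * x)
      = 0 := by
    intro x
    rw [← q4, mul_assoc, mul_assoc, q2', mul_zero]
  have := h z
  simp only [mul_add, add_mul, mul_assoc, q1', q3', mul_zero, zero_add, add_zero] at this
  rw [add_comm] at this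
  first
  | exact eq_of_add_eq_zero' K this
  | exact (eq_of_add_eq_zero' K this).symm
lemma q9 : g K δ * (g K γ * (g K β * g K α)) = g K β * (g K α * (g K δ * g K γ)) := by
  simpa using q9' K 1
lemma q10' (z : AA K) : g K β * (g K α * (g K δ * (g K γ * (g K β * z)))) = 0 := by
  rw [← q9', q1', mul_zero, mul_zero, mul_zero]
lemma q10 : g K β * (g K α * (g K δ * (g K γ * g K β))) = 0 := by simpa using q10' K 1
lemma q11 : g K α * (g K δ * (g K γ * (g K β * g K α))) = 0 := by rw [q9, q1']
lemma q12 : g K γ * (g K β * (g K α * (g K δ * g K γ))) = 0 := by rw [← q9, q3']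
lemma q13 : g K β * (g K α * (g K δ * (g K γ * (g K β * g K α)))) = 0 := by rw [q11, mul_zero]
lemma q14 : g K ξ * (g K β * (g K α * (g K ε * g K ξ))) = 0 := by
  rw [q4, mul_add, q1', zero_add, q7']

set_option maxHeartbeats 4000000 in
lemma g_mul_b (a : QGen) (k : Fin 28) : g K a * b K k = bsum K (lm a k) := by
  fin_cases k <;> cases a <;>
    simp (disch := decide) [b, word, wordTbl, bsum, lm, lmTbl, nc, nc', lv, lv', rv, src, tgt, q1, q1', q2, q2', q3,
      q3', q4, q4', q5, q5', q6, q6', q7, q7', q8, q9, q9', q10, q10', q11, q12, q13, q14]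

end Rules





set_option linter.unusedSectionVars false

/-! ### Independence: the regular representation -/

noncomputable def vec (l : List (Fin 28)) : Fin 28 → K := (l.map (fun i => Pi.single i (1 : K))).sum

lemma vec_apply (l : List (Fin 28)) (i : Fin 28) : vec K l i = (l.count i : K) := by
  induction l with
  | nil => simp [vec]
  | cons a l ih =>
    have : vec K (a :: l) = Pi.single a 1 + vec K l := by simp [vec]
    rw [this, Pi.add_apply, ih, List.count_cons]
    by_cases h : a = i
    · subst h; simp [add_comm]
    · simp [h, Ne.symm h]

def parEq (l l' : List (Fin 28)) : Prop := ∀ i : Fin 28, l.count i % 2 = l'.count i % 2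

instance (l l' : List (Fin 28)) : Decidable (parEq l l') := by unfold parEq; infer_instance

lemma vec_par [CharP K 2] {l l' : List (Fin 28)} (h : parEq l l') : vec K l = vec K l' := by
  funext i
  rw [vec_apply, vec_apply]
  exact (CharP.natCast_eq_natCast K 2).2 (h i)

lemma vec_append (l l' : List (Fin 28)) : vec K (l ++ l') = vec K l + vec K l' := by
  simp [vec]

lemma vec_nil : vec K [] = 0 := by simp [vec]
lemma vec_single (i : Fin 28) : vec K [i] = Pi.single i 1 := by simp [vec]

noncomputable def Lop (a : QGen) : Module.End K (Fin 28 → K) :=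
  (Pi.basisFun K (Fin 28)).constr K (fun k => vec K (lm a k))

lemma Lop_single (a : QGen) (k : Fin 28) : Lop K a (Pi.single k 1) = vec K (lm a k) := by
  have := (Pi.basisFun K (Fin 28)).constr_basis K (fun k => vec K (lm a k)) k
  rwa [Pi.basisFun_apply] at this

lemma Lop_vec (a : QGen) (l : List (Fin 28)) : Lop K a (vec K l) = vec K (l.flatMap (lm a)) := by
  induction l with
  | nil => simp [vec]
  | cons k l ih =>
    rw [List.flatMap_cons, vec_append, ← ih, ← Lop_single, ← map_add]
    simp [vec]

lemma end_ext {f f' : Module.End K (Fin 28 → K)} (h : ∀ k, f (vec K [k]) = f' (vec K [k])) :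
    f = f' := by
  refine (Pi.basisFun K (Fin 28)).ext fun k => ?_
  rw [Pi.basisFun_apply, ← vec_single]; exact h k

lemma Lop_rels [CharP K 2] : Rels (Lop K) where
  vv v w hv hw := by
    refine end_ext K fun k => ?_
    split_ifs with h
    · rw [Module.End.mul_apply, Lop_vec, Lop_vec, Lop_vec]
      apply vec_par
      subst h
      revert k
      rcases hv with rfl | rfl | rfl | rfl <;> decide +kernel
    · rw [Module.End.mul_apply, Lop_vec, Lop_vec, LinearMap.zero_apply, ← vec_nil]
      apply vec_par
      revert k
      rcases hv with rfl | rfl | rfl | rfl <;> rcases hw with rfl | rfl | rfl | rfl <;>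
        first | exact absurd rfl h | decide +kernel
  one := by
    refine end_ext K fun k => ?_
    simp only [LinearMap.add_apply, Lop_vec, Module.End.one_apply, ← vec_append]
    apply vec_par
    revert k
    decide +kernel
  sm a ha := by
    refine end_ext K fun k => ?_
    rw [Module.End.mul_apply, Lop_vec, Lop_vec]
    apply vec_par
    revert k
    rcases ha with rfl | rfl | rfl | rfl | rfl | rfl <;> decide +kernel
  mt a ha := by
    refine end_ext K fun k => ?_
    rw [Module.End.mul_apply, Lop_vec, Lop_vec, Lop_vec]
    apply vec_par
    revert k
    rcases ha with rfl | rfl | rfl | rfl | rfl | rfl <;> decide +kernel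
  om v a hv ha h := by
    refine end_ext K fun k => ?_
    rw [Module.End.mul_apply, Lop_vec, Lop_vec, LinearMap.zero_apply, ← vec_nil]
    apply vec_par
    revert k
    rcases ha with rfl | rfl | rfl | rfl | rfl | rfl <;> rcases hv with rfl | rfl | rfl | rfl <;>
        first | exact absurd rfl h | decide +kernel
  mo a v ha hv h := by
    refine end_ext K fun k => ?_
    rw [Module.End.mul_apply, Lop_vec, Lop_vec, LinearMap.zero_apply, ← vec_nil]
    apply vec_par
    revert k
    rcases ha with rfl | rfl | rfl | rfl | rfl | rfl <;> rcases hv with rfl | rfl | rfl | rfl <;>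
        first | exact absurd rfl h | decide +kernel
  r1 := by
    refine end_ext K fun k => ?_
    rw [Module.End.mul_apply, Lop_vec, Lop_vec, LinearMap.zero_apply, ← vec_nil]
    apply vec_par
    revert k
    decide +kernel
  r2 := by
    refine end_ext K fun k => ?_
    rw [Module.End.mul_apply, Lop_vec, Lop_vec, LinearMap.zero_apply, ← vec_nil]
    apply vec_par
    revert k
    decide +kernel
  r3 := by
    refine end_ext K fun k => ?_
    rw [Module.End.mul_apply, Lop_vec, Lop_vec, LinearMap.zero_apply, ← vec_nil]
    apply vec_par
    revert k
    decide +kernel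
  r4 := by
    refine end_ext K fun k => ?_
    simp only [LinearMap.add_apply, Module.End.mul_apply, Lop_vec, LinearMap.zero_apply, ← vec_nil,
      ← vec_append]
    apply vec_par
    revert k
    decide +kernel

/-- action of a word on a list of basis indices -/
def act (w : List QGen) (l : List (Fin 28)) : List (Fin 28) :=
  w.foldr (fun a l => l.flatMap (lm a)) l

section
variable [CharP K 2]

noncomputable def rho : AA K →ₐ[K] Module.End K (Fin 28 → K) := liftA K (Lop K) (Lop_rels K)

lemma rho_word (w : List QGen) (l : List (Fin 28)) :
    rho K ((w.map (g K)).prod) (vec K l) = vec K (act w l) := by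
  induction w with
  | nil => simp [act]
  | cons a w ih =>
    rw [List.map_cons, List.prod_cons, map_mul, Module.End.mul_apply, ih, rho, liftA_g, Lop_vec]
    rfl

/-- coordinates -/
noncomputable def phi : AA K →ₗ[K] (Fin 28 → K) :=
  (LinearMap.applyₗ (vec K [0, 1, 2, 3])).comp (rho K).toLinearMap

lemma phi_b (k : Fin 28) : phi K (b K k) = Pi.single k 1 := by
  change rho K (b K k) _ = _
  rw [b, rho_word, ← vec_single]
  congr 1
  revert k
  decide +kernel

noncomputable def psi : (Fin 28 → K) →ₗ[K] AA K := (Pi.basisFun K (Fin 28)).constr K (b K)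

lemma psi_single (k : Fin 28) : psi K (Pi.single k 1) = b K k := by
  have := (Pi.basisFun K (Fin 28)).constr_basis K (b K) k
  rwa [Pi.basisFun_apply] at this

lemma psi_vec (l : List (Fin 28)) : psi K (vec K l) = bsum K l := by
  induction l with
  | nil => simp [vec, bsum]
  | cons k l ih =>
    have : vec K (k :: l) = Pi.single k 1 + vec K l := by simp [vec]
    rw [this, map_add, ih, psi_single]; simp [bsum]

lemma bsum_par {l l' : List (Fin 28)} (h : parEq l l') : bsum K l = bsum K l' := by
  rw [← psi_vec, ← psi_vec, vec_par K h]

lemma phi_psi (v : Fin 28 → K) : phi K (psi K v) = v := by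
  have : (phi K).comp (psi K) = LinearMap.id := by
    refine (Pi.basisFun K (Fin 28)).ext fun k => ?_
    rw [Pi.basisFun_apply, LinearMap.comp_apply, psi_single, phi_b, LinearMap.id_apply]
  exact LinearMap.congr_fun this v

lemma g_mul_bsum (a : QGen) (l : List (Fin 28)) :
    g K a * bsum K l = bsum K (l.flatMap (lm a)) := by
  induction l with
  | nil => simp [bsum]
  | cons k l ih =>
    have h : bsum K (k :: l) = b K k + bsum K l := by simp [bsum]
    rw [h, mul_add, ih, g_mul_b, List.flatMap_cons]
    simp [bsum]

lemma one_eq : (1 : AA K) = bsum K [0, 1, 2, 3] := by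
  rw [← (g_rels K).one]
  simp [bsum, b, word, wordTbl, add_assoc]

lemma psi_surj : LinearMap.range (psi K) = ⊤ := by
  apply submodule_eq_top
  · exact ⟨vec K [0, 1, 2, 3], by rw [psi_vec, one_eq]⟩
  · rintro a _ ⟨v, rfl⟩
    have : (LinearMap.mulLeft K (g K a)).comp (psi K) = (psi K).comp (Lop K a) := by
      refine (Pi.basisFun K (Fin 28)).ext fun k => ?_
      rw [Pi.basisFun_apply, LinearMap.comp_apply, LinearMap.comp_apply, psi_single, Lop_single,
        psi_vec, LinearMap.mulLeft_apply, g_mul_b]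
    exact ⟨Lop K a v, (LinearMap.congr_fun this v).symm⟩

/-- the coordinate isomorphism -/
noncomputable def coordE : AA K ≃ₗ[K] (Fin 28 → K) :=
  LinearEquiv.symm (LinearEquiv.ofBijective (psi K)
    ⟨Function.LeftInverse.injective (phi_psi K), LinearMap.range_eq_top.1 (psi_surj K)⟩)

/-- the basis of `A₁` -/
noncomputable def bA : Module.Basis (Fin 28) K (AA K) := Module.Basis.ofEquivFun (coordE K)

lemma bA_apply (k : Fin 28) : bA K k = b K k := by
  rw [bA, Module.Basis.coe_ofEquivFun]
  exact psi_single K k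

def mulL (k l : Fin 28) : List (Fin 28) := act (word k) [l]

lemma word_mul_bsum (w : List QGen) (l : List (Fin 28)) :
    (w.map (g K)).prod * bsum K l = bsum K (act w l) := by
  induction w with
  | nil => simp [act]
  | cons a w ih =>
    rw [List.map_cons, List.prod_cons, mul_assoc, ih, g_mul_bsum]
    rfl

lemma b_mul_bsum (k : Fin 28) (l : List (Fin 28)) : b K k * bsum K l = bsum K (act (word k) l) :=
  word_mul_bsum K _ _

lemma bsum_single (k : Fin 28) : bsum K [k] = b K k := by simp [bsum]

lemma b_mul_b (k l : Fin 28) : b K k * b K l = bsum K (mulL k l) := by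
  rw [← bsum_single K l, b_mul_bsum]; rfl

end


/-! ### Projective modules given by tuples of idempotents -/

section PM
variable {R : Type} [Ring R] {ι : Type} [Fintype ι] [DecidableEq ι]

/-- the left module `⨁ R u_i` -/
def PS (u : ι → R) : Submodule R (ι → R) where
  carrier := {v | ∀ i, v i * u i = v i}
  add_mem' := by
    intro v w hv hw i
    rw [Pi.add_apply, add_mul, hv i, hw i]
  zero_mem' := by intro i; simp
  smul_mem' := by
    intro r v hv i
    rw [Pi.smul_apply, smul_eq_mul, mul_assoc, hv i]

variable (u : ι → R) (hu : ∀ i, u i * u i = u i)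

lemma PS_proj (hu : ∀ i, u i * u i = u i) : Module.Projective R (PS u) := by
  refine Module.Projective.of_split (P := PS u) (M := ι → R) (PS u).subtype
    { toFun := fun v => ⟨fun i => v i * u i, fun i => by rw [mul_assoc, hu i]⟩
      map_add' := by intro v w; ext i; simp [add_mul]
      map_smul' := by intro r v; ext i; simp [mul_assoc] } ?_
  ext v i
  exact v.2 i

/-- the module `⨁ R u_i`, as a type -/
def PM (u : ι → R) : Type := PS u

instance : AddCommGroup (PM u) := inferInstanceAs (AddCommGroup (PS u))
instance : Module R (PM u) := inferInstanceAs (Module R (PS u))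

lemma PM_proj (hu : ∀ i, u i * u i = u i) : Module.Projective R (PM u) := PS_proj u hu

variable {u} in
/-- the components -/
def PM.val : PM u →ₗ[R] (ι → R) := (PS u).subtype

variable {u} in
lemma PM.ext {v w : PM u} (h : ∀ i, v.val i = w.val i) : v = w := Subtype.ext (funext h)

def PM.mk (v : ι → R) (h : ∀ i, v i * u i = v i) : PM u := ⟨v, h⟩

lemma PM.mk_val (v : ι → R) (h : ∀ i, v i * u i = v i) : (PM.mk u v h).val = v := rfl

variable {u} in
lemma PM.prop (v : PM u) (i : ι) : v.val i * u i = v.val i := v.2 i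

def PMgen (hu : ∀ i, u i * u i = u i) (i : ι) : PM u :=
  PM.mk u (Pi.single i (u i)) fun j => by
    by_cases h : j = i
    · subst h; simp [hu]
    · simp [h]

lemma PMgen_val (hu : ∀ i, u i * u i = u i) (i : ι) : (PMgen u hu i).val = Pi.single i (u i) := rfl

def PMlift {M : Type} [AddCommGroup M] [Module R M] (m : ι → M) : PM u →ₗ[R] M where
  toFun v := ∑ i, v.val i • m i
  map_add' v w := by simp [add_smul, Finset.sum_add_distrib]
  map_smul' r v := by simp [mul_smul, Finset.smul_sum]

variable {u}
lemma PMlift_apply {M : Type} [AddCommGroup M] [Module R M] (m : ι → M) (v : PM u) :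
    PMlift u m v = ∑ i, v.val i • m i := rfl

lemma PMlift_gen {M : Type} [AddCommGroup M] [Module R M] (m : ι → M) (i : ι) :
    PMlift u m (PMgen u hu i) = u i • m i := by
  rw [PMlift_apply, Finset.sum_eq_single i]
  · simp [PMgen_val]
  · intro j _ h; simp [PMgen_val, h]
  · simp

lemma PM_sum (v : PM u) : v = ∑ i, v.val i • PMgen u hu i := by
  apply PM.ext
  intro j
  rw [map_sum, Finset.sum_apply, Finset.sum_eq_single j]
  · simpa [PMgen_val] using (v.prop j).symm
  · intro i _ h; simp [PMgen_val, Ne.symm h]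
  · simp

lemma PM_hom {M : Type} [AddCommGroup M] [Module R M] (f : PM u →ₗ[R] M) (v : PM u) :
    f v = ∑ i, v.val i • f (PMgen u hu i) := by
  conv_lhs => rw [PM_sum hu v]
  simp

lemma PMgen_smul (i : ι) : u i • PMgen u hu i = PMgen u hu i := by
  apply PM.ext
  intro j
  by_cases h : j = i
  · subst h; simp [PMgen_val, hu]
  · simp [PMgen_val, h]

end PM

/-- fixed vectors of a diagonal operator -/
lemma finrank_fixed {V J : Type} [AddCommGroup V] [Module K V] [Fintype J]
    (B : Module.Basis J K V) (c : J → Prop) [DecidablePred c] (E : V →ₗ[K] V)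
    (hE : ∀ j, E (B j) = if c j then B j else 0) (S : Submodule K V)
    (hS : ∀ v, v ∈ S ↔ E v = v) :
    Module.finrank K S = Fintype.card {j // c j} := by
  classical
  have hrep : ∀ v j, B.repr (E v) j = if c j then B.repr v j else 0 := by
    intro v j
    have : (Finsupp.lapply j ∘ₗ B.repr.toLinearMap ∘ₗ E) =
        (if c j then (1 : K) else 0) • (Finsupp.lapply j ∘ₗ B.repr.toLinearMap) := by
      refine B.ext fun k => ?_
      by_cases hk : k = j
      · subst hk
        by_cases h : c k <;> simp [hE, h]
      · by_cases h : c k <;> by_cases h' : c j <;> simp [hE, h, h', hk]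
    have h2 := LinearMap.congr_fun this v
    by_cases h' : c j <;> simpa [h'] using h2
  let F : S →ₗ[K] ({j // c j} → K) :=
    { toFun := fun v j => B.repr v.1 j.1
      map_add' := by intro v w; ext j; simp
      map_smul' := by intro r v; ext j; simp }
  have hF : Function.Bijective F := by
    constructor
    · rw [injective_iff_map_eq_zero]
      intro v hv
      apply Subtype.ext
      apply B.repr.injective
      ext j
      have h1 := hrep v.1 j
      rw [(hS _).1 v.2] at h1
      by_cases h : c j
      · have := congrFun hv ⟨j, h⟩
        simpa [F] using this
      · rw [if_neg h] at h1
        simpa using h1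
    · intro w
      let v : V := B.equivFun.symm (fun j => if h : c j then w ⟨j, h⟩ else 0)
      have hv : ∀ j, B.repr v j = if h : c j then w ⟨j, h⟩ else 0 := by
        intro j
        rw [← B.equivFun_apply, LinearEquiv.apply_symm_apply]
      refine ⟨⟨v, (hS v).2 ?_⟩, ?_⟩
      · apply B.repr.injective
        ext j
        rw [hrep, hv]
        by_cases h : c j <;> simp [h]
      · ext j
        change B.repr v j.1 = _
        rw [hv, dif_pos j.2]
  rw [(LinearEquiv.ofBijective F hF).finrank_eq, Module.finrank_fintype_fun_eq_card]


/-! ### The enveloping algebra -/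

/-- the enveloping algebra -/
def RR : Type := AA K ⊗[K] (AA K)ᵐᵒᵖ

noncomputable instance : Ring (RR K) := inferInstanceAs (Ring (AA K ⊗[K] (AA K)ᵐᵒᵖ))
noncomputable instance : Algebra K (RR K) := inferInstanceAs (Algebra K (AA K ⊗[K] (AA K)ᵐᵒᵖ))

noncomputable def tm (x y : AA K) : RR K := (x ⊗ₜ[K] MulOpposite.op y : AA K ⊗[K] (AA K)ᵐᵒᵖ)

lemma tm_mul (x y z w : AA K) : tm K x y * tm K z w = tm K (x * z) (w * y) :=
  Algebra.TensorProduct.tmul_mul_tmul (R := K) x z (MulOpposite.op y) (MulOpposite.op w)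

lemma tm_add_left (x x' y : AA K) : tm K (x + x') y = tm K x y + tm K x' y :=
  TensorProduct.add_tmul x x' (MulOpposite.op y)
lemma tm_add_right (x y y' : AA K) : tm K x (y + y') = tm K x y + tm K x y' :=
  TensorProduct.tmul_add x (MulOpposite.op y) (MulOpposite.op y')
lemma tm_smul_left (r : K) (x y : AA K) : tm K (r • x) y = r • tm K x y :=
  TensorProduct.smul_tmul' r x (MulOpposite.op y)
lemma tm_smul_right (r : K) (x y : AA K) : tm K x (r • y) = r • tm K x y :=
  TensorProduct.tmul_smul r x (MulOpposite.op y)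
lemma tm_zero_left (y : AA K) : tm K 0 y = 0 := TensorProduct.zero_tmul _ (MulOpposite.op y)
lemma tm_zero_right (y : AA K) : tm K y 0 = 0 := TensorProduct.tmul_zero _ y
lemma tm_one : tm K 1 1 = 1 := rfl

lemma RR_induction (p : RR K → Prop) (h0 : p 0) (h1 : ∀ x y, p (tm K x y))
    (h2 : ∀ x y, p x → p y → p (x + y)) (x : RR K) : p x :=
  TensorProduct.induction_on (motive := p) (x : AA K ⊗[K] (AA K)ᵐᵒᵖ) h0
    (fun x y => h1 x y.unop) (fun x y hx hy => h2 x y hx hy)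

noncomputable instance modRA : Module (RR K) (AA K) :=
  (TensorProduct.Algebra.module : Module (AA K ⊗[K] (AA K)ᵐᵒᵖ) (AA K))

lemma tm_smul (x y m : AA K) : tm K x y • m = x * m * y := by
  have : tm K x y • m = x • (MulOpposite.op y) • m :=
    TensorProduct.Algebra.smul_def (R := K) x (MulOpposite.op y) m
  rw [this]
  simp [mul_assoc]

lemma RR_add_self [CharP K 2] {M : Type} [AddCommGroup M] [Module (RR K) M] (x : M) :
    x + x = 0 := by
  have h : ((1 : RR K) + 1) = 0 := by
    have h3 : (1 : AA K) + 1 = 0 := add_self' K 1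
    rw [← tm_one, ← tm_add_left, h3, tm_zero_left]
  have : ((1 : RR K) + 1) • x = 0 := by rw [h]; exact zero_smul (RR K) x
  rwa [add_smul, one_smul] at this

/-! indexing of vertices and arrows -/
def vt : Fin 4 → QGen := ![e1, e2, e3, e4]
def ar : Fin 6 → QGen := ![α, β, γ, δ, ε, ξ]
def si : Fin 6 → Fin 4 := ![0, 3, 2, 3, 3, 1]
def ti : Fin 6 → Fin 4 := ![3, 0, 3, 2, 1, 3]
def rev : Fin 6 → Fin 6 := ![1, 0, 3, 2, 5, 4]

noncomputable abbrev ev (i : Fin 4) : AA K := g K (vt i)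
noncomputable abbrev aw (j : Fin 6) : AA K := g K (ar j)

lemma vt_vertex (i : Fin 4) : IsVertex (vt i) := by revert i; decide
lemma vt_inj : Function.Injective vt := by decide
lemma src_ar (j : Fin 6) : src (ar j) = vt (si j) := by revert j; decide
lemma tgt_ar (j : Fin 6) : tgt (ar j) = vt (ti j) := by revert j; decide
lemma si_rev (j : Fin 6) : si (rev j) = ti j := by revert j; decide
lemma ti_rev (j : Fin 6) : ti (rev j) = si j := by revert j; decide

lemma ev_mul (i j : Fin 4) : ev K i * ev K j = if i = j then ev K i else 0 := by
  rw [(g_rels K).vv _ _ (vt_vertex i) (vt_vertex j)]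
  by_cases h : i = j
  · simp [h]
  · rw [if_neg h, if_neg (fun h' => h (vt_inj h'))]

lemma ev_idem (i : Fin 4) : ev K i * ev K i = ev K i := by simp [ev_mul]

lemma ev_sum : ∑ i, ev K i = 1 := by
  rw [← (g_rels K).one, Fin.sum_univ_four]; rfl

lemma ev_aw (i : Fin 4) (j : Fin 6) : ev K i * aw K j = if i = si j then aw K j else 0 := by
  have h := (g_rels K).lv (ar j)
  rw [src_ar] at h
  change ev K (si j) * aw K j = aw K j at h
  rw [← h, ← mul_assoc, ev_mul]
  split_ifs with h1
  · rw [h1]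
  · rw [zero_mul]

lemma aw_ev (j : Fin 6) (i : Fin 4) : aw K j * ev K i = if ti j = i then aw K j else 0 := by
  have h := (g_rels K).rv (ar j)
  rw [tgt_ar] at h
  change aw K j * ev K (ti j) = aw K j at h
  rw [← h, mul_assoc, ev_mul]
  split_ifs with h1
  · rfl
  · rw [mul_zero]

lemma aw_ti (j : Fin 6) : aw K j * ev K (ti j) = aw K j := by simp [aw_ev]
lemma si_aw (j : Fin 6) : ev K (si j) * aw K j = aw K j := by simp [ev_aw]

/-! ### The projective bimodules -/
noncomputable def u0 (i : Fin 4) : RR K := tm K (ev K i) (ev K i)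
noncomputable def u1 (j : Fin 6) : RR K := tm K (ev K (si j)) (ev K (ti j))

lemma hu0 (i : Fin 4) : u0 K i * u0 K i = u0 K i := by simp [u0, tm_mul, ev_idem]
lemma hu1 (i : Fin 6) : u1 K i * u1 K i = u1 K i := by simp [u1, tm_mul, ev_idem]

noncomputable abbrev P0 := PM (u0 K)
noncomputable abbrev P1 := PM (u1 K)

noncomputable def G0 (i : Fin 4) : P0 K := PMgen (u0 K) (hu0 K) i
noncomputable def G1 (j : Fin 6) : P1 K := PMgen (u1 K) (hu1 K) j
noncomputable def GG : P0 K := ∑ i, G0 K i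

lemma G0_val (i j : Fin 4) : (G0 K i).val j = if i = j then u0 K i else 0 := by
  simp only [G0, PMgen_val, Pi.single_apply]
  by_cases h : i = j
  · simp [h]
  · simp [h, Ne.symm h]

lemma tm_G0_left (x y : AA K) (i : Fin 4) : tm K x y • G0 K i = tm K (x * ev K i) y • G0 K i := by
  apply PM.ext
  intro j
  simp only [map_smul, Pi.smul_apply, G0_val, smul_eq_mul]
  split_ifs
  · rw [u0, tm_mul, tm_mul, mul_assoc, ev_idem]
  · simp

lemma tm_G0_right (x y : AA K) (i : Fin 4) : tm K x y • G0 K i = tm K x (ev K i * y) • G0 K i := by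
  apply PM.ext
  intro j
  simp only [map_smul, Pi.smul_apply, G0_val, smul_eq_mul]
  split_ifs
  · rw [u0, tm_mul, tm_mul, ← mul_assoc (ev K i), ev_idem]
  · simp

/-- inner derivation -/
noncomputable def D1 (j : Fin 6) : P0 K := tm K (aw K j) 1 • GG K + tm K 1 (aw K j) • GG K

noncomputable def pmap : P0 K →ₗ[RR K] AA K := PMlift (u0 K) (ev K)
noncomputable def d1 : P1 K →ₗ[RR K] P0 K := PMlift (u1 K) (D1 K)

noncomputable def D2 (i : Fin 4) : P1 K :=
  ∑ j, ((if si j = i then tm K 1 (aw K (rev j)) else 0) • G1 K j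
    + (if ti j = i then tm K (aw K (rev j)) 1 else 0) • G1 K j)

noncomputable def d2 : P0 K →ₗ[RR K] P1 K := PMlift (u0 K) (D2 K)


/-! ### Exactness at `P0` -/

lemma tm_smul_smul {M : Type} [AddCommGroup M] [Module (RR K) M] (x y z w : AA K) (m : M) :
    tm K x y • tm K z w • m = tm K (x * z) (w * y) • m := by
  rw [← tm_mul, mul_smul]

lemma tm_zero_smul_left {M : Type} [AddCommGroup M] [Module (RR K) M] (y : AA K) (m : M) :
    tm K 0 y • m = 0 := by
  rw [tm_zero_left]; exact zero_smul (RR K) m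

lemma tm_zero_smul_right {M : Type} [AddCommGroup M] [Module (RR K) M] (y : AA K) (m : M) :
    tm K y 0 • m = 0 := by
  rw [tm_zero_right]; exact zero_smul (RR K) m

lemma tm_add_smul_left {M : Type} [AddCommGroup M] [Module (RR K) M] (x x' y : AA K) (m : M) :
    tm K (x + x') y • m = tm K x y • m + tm K x' y • m := by
  rw [tm_add_left]; exact add_smul _ _ m

lemma tm_add_smul_right {M : Type} [AddCommGroup M] [Module (RR K) M] (x y y' : AA K) (m : M) :
    tm K x (y + y') • m = tm K x y • m + tm K x y' • m := by
  rw [tm_add_right]; exact add_smul _ _ m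

lemma ev_GG_left (i : Fin 4) : tm K (ev K i) 1 • GG K = G0 K i := by
  rw [GG, Finset.smul_sum, Finset.sum_eq_single i]
  · have := PMgen_smul (hu0 K) i
    rw [u0] at this
    rw [tm_G0_right, mul_one]
    exact this
  · intro j _ h
    rw [tm_G0_left, ev_mul, if_neg (Ne.symm h), tm_zero_smul_left K]
  · simp

lemma ev_GG_right (i : Fin 4) : tm K 1 (ev K i) • GG K = G0 K i := by
  rw [GG, Finset.smul_sum, Finset.sum_eq_single i]
  · have := PMgen_smul (hu0 K) i
    rw [u0] at this
    rw [tm_G0_left, one_mul]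
    exact this
  · intro j _ h
    rw [tm_G0_right, ev_mul, if_neg h, tm_zero_smul_right K]
  · simp

noncomputable def dD (x : AA K) : P0 K := tm K x 1 • GG K + tm K 1 x • GG K

section
variable [CharP K 2]

lemma dD_mul (x y : AA K) : dD K (x * y) = tm K x 1 • dD K y + tm K 1 y • dD K x := by
  simp only [dD, smul_add, tm_smul_smul K, mul_one, one_mul]
  have := RR_add_self K (tm K x y • GG K)
  generalize tm K x y • GG K = z at *
  have h2 : ∀ p q : P0 K, p + q = (p + q) + (z + z) := by intro p q; rw [this, add_zero]
  rw [h2]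
  abel

lemma dD_add (x y : AA K) : dD K (x + y) = dD K x + dD K y := by
  simp only [dD, tm_add_smul_left K, tm_add_smul_right K]
  abel

lemma dD_zero : dD K 0 = 0 := by
  rw [dD, tm_zero_smul_left K, tm_zero_smul_right K, add_zero]

lemma dD_ev (i : Fin 4) : dD K (ev K i) = 0 := by
  rw [dD, ev_GG_left, ev_GG_right, RR_add_self K]

lemma D1_eq (j : Fin 6) : D1 K j = dD K (aw K j) := rfl

lemma D1_left (j : Fin 6) : tm K (ev K (si j)) 1 • D1 K j = D1 K j := by
  have := dD_mul K (ev K (si j)) (aw K j)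
  rw [si_aw, dD_ev, smul_zero, add_zero] at this
  exact this.symm

lemma D1_right (j : Fin 6) : tm K 1 (ev K (ti j)) • D1 K j = D1 K j := by
  have := dD_mul K (aw K j) (ev K (ti j))
  rw [aw_ti, dD_ev, smul_zero, zero_add] at this
  exact this.symm

lemma u1_smul_of {M : Type} [AddCommGroup M] [Module (RR K) M] (j : Fin 6) (m : M)
    (h1 : tm K (ev K (si j)) 1 • m = m) (h2 : tm K 1 (ev K (ti j)) • m = m) :
    u1 K j • m = m := by
  have : tm K (ev K (si j)) 1 • tm K 1 (ev K (ti j)) • m = u1 K j • m := by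
    rw [tm_smul_smul K, mul_one, mul_one]; rfl
  rw [← this, h2, h1]

lemma d1_G1 (j : Fin 6) : d1 K (G1 K j) = D1 K j := by
  rw [d1, G1, PMlift_gen]
  exact u1_smul_of K j _ (D1_left K j) (D1_right K j)

lemma pmap_G0 (i : Fin 4) : pmap K (G0 K i) = ev K i := by
  rw [pmap, G0, PMlift_gen, u0, tm_smul, ev_idem, ev_idem]

lemma pmap_GG : pmap K (GG K) = 1 := by
  rw [GG, map_sum, ← ev_sum]
  exact Finset.sum_congr rfl fun i _ => pmap_G0 K i

lemma pmap_surj : Function.Surjective (pmap K) := by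
  intro x
  refine ⟨tm K x 1 • GG K, ?_⟩
  rw [map_smul, pmap_GG, tm_smul, mul_one, mul_one]

lemma pmap_dD (x : AA K) : pmap K (dD K x) = 0 := by
  rw [dD, map_add, map_smul, map_smul, pmap_GG, tm_smul, tm_smul]
  simp [add_self']

/-- the class of `GG` modulo the range of `d1` is central -/
lemma dD_mem (x : AA K) : dD K x ∈ LinearMap.range (d1 K) := by
  refine A_induction K (fun x => dD K x ∈ LinearMap.range (d1 K)) ?_ ?_ ?_ ?_ x
  · intro r
    have : dD K (algebraMap K _ r) = 0 := by
      rw [Algebra.algebraMap_eq_smul_one, dD, tm_smul_left, tm_smul_right, RR_add_self K]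
    rw [this]; exact Submodule.zero_mem _
  · intro a
    rcases va a with h | h
    · have : dD K (g K a) = 0 := by
        rcases h with rfl | rfl | rfl | rfl
        · exact dD_ev K 0
        · exact dD_ev K 1
        · exact dD_ev K 2
        · exact dD_ev K 3
      rw [this]; exact Submodule.zero_mem _
    · rcases h with rfl | rfl | rfl | rfl | rfl | rfl
      · exact ⟨G1 K 0, d1_G1 K 0⟩
      · exact ⟨G1 K 1, d1_G1 K 1⟩
      · exact ⟨G1 K 2, d1_G1 K 2⟩
      · exact ⟨G1 K 3, d1_G1 K 3⟩
      · exact ⟨G1 K 4, d1_G1 K 4⟩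
      · exact ⟨G1 K 5, d1_G1 K 5⟩
  · intro x y hx hy
    rw [dD_mul]
    exact Submodule.add_mem _ (Submodule.smul_mem _ _ hy) (Submodule.smul_mem _ _ hx)
  · intro x y hx hy
    rw [dD_add]
    exact Submodule.add_mem _ hx hy

lemma P0_red (z : RR K) (i : Fin 4) :
    z • G0 K i + tm K 1 (z • ev K i) • GG K ∈ LinearMap.range (d1 K) := by
  refine RR_induction K (fun z => z • G0 K i + tm K 1 (z • ev K i) • GG K
    ∈ LinearMap.range (d1 K)) ?_ ?_ ?_ z
  · have h1 : (0 : RR K) • G0 K i = 0 := zero_smul _ _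
    have h2 : (0 : RR K) • ev K i = 0 := zero_smul _ _
    rw [h1, h2, tm_zero_smul_right K, add_zero]
    exact Submodule.zero_mem _
  · intro x y
    have : tm K x y • G0 K i + tm K 1 (tm K x y • ev K i) • GG K
        = tm K 1 y • dD K (x * ev K i) := by
      rw [dD, smul_add, tm_smul_smul K, tm_smul_smul K, tm_smul, ← ev_GG_left, tm_smul_smul K]
      simp
    rw [this]
    exact Submodule.smul_mem _ _ (dD_mem K _)
  · intro x y hx hy
    have h1 : (x + y) • G0 K i = x • G0 K i + y • G0 K i := add_smul _ _ _
    have h2 : (x + y) • ev K i = x • ev K i + y • ev K i := add_smul _ _ _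
    rw [h1, h2, tm_add_smul_right K, add_add_add_comm]
    exact Submodule.add_mem _ hx hy

lemma tm_sum_right {ι : Type} (s : Finset ι) (x : AA K) (y : ι → AA K) :
    tm K x (∑ i ∈ s, y i) = ∑ i ∈ s, tm K x (y i) := by
  classical
  induction s using Finset.induction_on with
  | empty => simp [tm_zero_right]
  | insert i s hi ih => rw [Finset.sum_insert hi, Finset.sum_insert hi, tm_add_right, ih]

lemma exact_P0 : Function.Exact (d1 K) (pmap K) := by
  intro v
  constructor
  · intro h
    have h1 : v = ∑ i, (v.val i • G0 K i + tm K 1 (v.val i • ev K i) • GG K) := by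
      rw [Finset.sum_add_distrib, ← Finset.sum_smul, ← tm_sum_right]
      have h2 : ∑ i, v.val i • ev K i = 0 := h
      rw [h2, tm_zero_smul_right K, add_zero]
      exact PM_sum (hu0 K) v
    rw [h1]
    exact Submodule.sum_mem _ fun i _ => P0_red K _ i
  · rintro ⟨w, rfl⟩
    rw [PM_hom (hu1 K) (d1 K) w, map_sum]
    refine Finset.sum_eq_zero fun j _ => ?_
    rw [map_smul]
    have : d1 K (PMgen (u1 K) (hu1 K) j) = dD K (aw K j) := d1_G1 K j
    rw [this, pmap_dD, smul_zero]

end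


/-! ### Derivations and exactness at `P1` -/

section
variable {R : Type} [Ring R] [Algebra K R] {ι : Type} [Fintype ι] [DecidableEq ι] (u : ι → R)

instance : Module K (PM u) := inferInstanceAs (Module K (PS u))
instance : IsScalarTower K R (PM u) := inferInstanceAs (IsScalarTower K R (PS u))
end

section Deriv
variable {M : Type} [AddCommGroup M] [Module K M] [Module (RR K) M] [IsScalarTower K (RR K) M]

lemma tm_smulK_left (r : K) (x y : AA K) (m : M) : tm K (r • x) y • m = r • tm K x y • m := by
  rw [tm_smul_left, smul_assoc]
lemma tm_smulK_right (r : K) (x y : AA K) (m : M) : tm K x (r • y) • m = r • tm K x y • m := by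
  rw [tm_smul_right, smul_assoc]
lemma tm_smulK (r : K) (x y : AA K) (m : M) : tm K x y • r • m = r • tm K x y • m := by
  rw [← tm_smulK_left, ← smul_one_smul (RR K) r m, ← tm_one, ← tm_smul_left, tm_smul_smul]
  congr 2
  · simp
  · simp

/-- upper triangular operators -/
noncomputable def op (x : AA K) (n : M) : Module.End K (AA K × M) where
  toFun p := (x * p.1, tm K x 1 • p.2 + tm K 1 p.1 • n)
  map_add' p q := by
    refine Prod.ext ?_ ?_
    · simp [mul_add]
    · simp only [Prod.fst_add, Prod.snd_add, smul_add, tm_add_smul_right K]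
      abel
  map_smul' r p := by
    refine Prod.ext ?_ ?_
    · simp
    · simp only [Prod.smul_fst, Prod.smul_snd, tm_smulK, tm_smulK_right, RingHom.id_apply, smul_add]

lemma op_apply (x y : AA K) (n c : M) : op K x n (y, c) = (x * y, tm K x 1 • c + tm K 1 y • n) := rfl

lemma op_mul (x x' : AA K) (n n' : M) :
    op K x n * op K x' n' = op K (x * x') (tm K x 1 • n' + tm K 1 x' • n) := by
  refine LinearMap.ext fun p => ?_
  obtain ⟨y, c⟩ := p
  rw [Module.End.mul_apply, op_apply, op_apply, op_apply, mul_assoc]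
  refine Prod.ext rfl ?_
  simp only [smul_add, tm_smul_smul K, mul_one, one_mul]
  abel

lemma op_add (x x' : AA K) (n n' : M) : op K x n + op K x' n' = op K (x + x') (n + n') := by
  refine LinearMap.ext fun p => ?_
  obtain ⟨y, c⟩ := p
  rw [LinearMap.add_apply, op_apply, op_apply, op_apply, add_mul]
  refine Prod.ext rfl ?_
  simp only [smul_add, tm_add_smul_left K, Prod.snd_add]
  abel

lemma op_zero : op K 0 (0 : M) = 0 := by
  refine LinearMap.ext fun p => ?_
  obtain ⟨y, c⟩ := p
  rw [op_apply, zero_mul, tm_zero_smul_left, smul_zero, add_zero]; rfl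

lemma op_one : op K 1 (0 : M) = 1 := by
  refine LinearMap.ext fun p => ?_
  obtain ⟨y, c⟩ := p
  rw [op_apply, one_mul, tm_one, smul_zero, add_zero, one_smul]; rfl

lemma exists_deriv (m : QGen → M) (hv : ∀ v, IsVertex v → m v = 0)
    (hs : ∀ a, IsArrow a → tm K (g K (src a)) 1 • m a = m a)
    (ht : ∀ a, IsArrow a → tm K 1 (g K (tgt a)) • m a = m a)
    (h1 : tm K (g K α) 1 • m β + tm K 1 (g K β) • m α = 0)
    (h2 : tm K (g K ξ) 1 • m ε + tm K 1 (g K ε) • m ξ = 0)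
    (h3 : tm K (g K γ) 1 • m δ + tm K 1 (g K δ) • m γ = 0)
    (h4 : (tm K (g K β) 1 • m α + tm K 1 (g K α) • m β) +
      (tm K (g K δ) 1 • m γ + tm K 1 (g K γ) • m δ) +
      (tm K (g K ε) 1 • m ξ + tm K 1 (g K ξ) • m ε) = 0) :
    ∃ D : AA K →ₗ[K] M, (∀ a, D (g K a) = m a) ∧
      ∀ x y, D (x * y) = tm K x 1 • D y + tm K 1 y • D x := by
  have G := g_rels K
  have hrel : Rels (fun a => op K (g K a) (m a)) :=
    { vv := by
        intro v w hv' hw'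
        rw [op_mul, hv v hv', hv w hw', smul_zero, smul_zero, add_zero, G.vv v w hv' hw']
        split_ifs
        · rfl
        · exact op_zero K
      one := by
        rw [op_add, op_add, op_add, hv e1 (by decide), hv e2 (by decide), hv e3 (by decide),
          hv e4 (by decide), G.one, add_zero, add_zero, add_zero, op_one]
      sm := by
        intro a ha
        rw [op_mul, G.sm a ha, hs a ha, hv _ (src_vertex a), smul_zero, add_zero]
      mt := by
        intro a ha
        rw [op_mul, G.mt a ha, ht a ha, hv _ (tgt_vertex a), smul_zero, zero_add]
      om := by
        intro v a hv' ha h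
        rw [op_mul, G.om v a hv' ha h, hv v hv', smul_zero, add_zero, ← hs a ha, tm_smul_smul,
          G.vv _ _ hv' (src_vertex a), if_neg h, tm_zero_smul_left, op_zero]
      mo := by
        intro a v ha hv' h
        rw [op_mul, G.mo a v ha hv' h, hv v hv', smul_zero, zero_add, ← ht a ha, tm_smul_smul,
          G.vv _ _ (tgt_vertex a) hv', if_neg (Ne.symm h), tm_zero_smul_right, op_zero]
      r1 := by rw [op_mul, h1, G.r1, op_zero]
      r2 := by rw [op_mul, h2, G.r2, op_zero]
      r3 := by rw [op_mul, h3, G.r3, op_zero]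
      r4 := by rw [op_mul, op_mul, op_mul, op_add, op_add, h4, G.r4, op_zero] }
  let Φ : AA K →ₐ[K] Module.End K (AA K × M) := liftA K _ hrel
  let D : AA K →ₗ[K] M :=
    (LinearMap.snd K (AA K) M).comp ((LinearMap.applyₗ ((1 : AA K), (0 : M))).comp Φ.toLinearMap)
  have hD : ∀ x, D x = (Φ x (1, 0)).2 := fun x => rfl
  have key : ∀ x, Φ x = op K x (D x) := by
    have aux : ∀ x n, Φ x = op K x n → Φ x = op K x (D x) := by
      intro x n h
      have : D x = n := by
        rw [hD, h, op_apply, smul_zero, zero_add, tm_one, one_smul]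
      rw [this]; exact h
    intro x
    refine A_induction K (fun x => Φ x = op K x (D x)) ?_ ?_ ?_ ?_ x
    · intro r
      refine aux _ 0 ?_
      rw [AlgHom.commutes]
      refine LinearMap.ext fun p => ?_
      obtain ⟨y, c⟩ := p
      rw [op_apply, smul_zero, add_zero, Module.algebraMap_end_apply, Prod.smul_mk,
        Algebra.algebraMap_eq_smul_one, tm_smulK_left, tm_one, one_smul, smul_one_mul]
    · intro a
      exact aux _ (m a) (liftA_g K _ hrel a)
    · intro x y hx hy
      refine aux _ (tm K x 1 • D y + tm K 1 y • D x) ?_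
      rw [map_mul, hx, hy, op_mul]
    · intro x y hx hy
      refine aux _ (D x + D y) ?_
      rw [map_add, hx, hy, op_add]
  have hop : ∀ x (n : M), (op K x n (1, 0)).2 = n := by
    intro x n
    rw [op_apply, smul_zero, zero_add, tm_one, one_smul]
  refine ⟨D, ?_, ?_⟩
  · intro a
    rw [hD]
    have : Φ (g K a) = op K (g K a) (m a) := liftA_g K _ hrel a
    rw [this, hop]
  · intro x y
    rw [hD, map_mul, key x, key y, op_mul, hop]

/-- extension of a derivation to the enveloping algebra -/
lemma exists_S (D : AA K →ₗ[K] M) : ∃ S : RR K →+ M, ∀ x y, S (tm K x y) = tm K 1 y • D x := by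
  let B : AA K →ₗ[K] (AA K)ᵐᵒᵖ →ₗ[K] M := LinearMap.mk₂ K (fun x y => tm K 1 y.unop • D x)
    (by intro x x' y; simp only [map_add, smul_add])
    (by intro r x y; simp only [map_smul, tm_smulK])
    (by intro x y y'; simp only [MulOpposite.unop_add, tm_add_smul_right K])
    (by intro r x y; simp only [MulOpposite.unop_smul, tm_smulK_right])
  exact ⟨(TensorProduct.lift B).toAddMonoidHom, fun x y => rfl⟩

end Deriv

section
variable [CharP K 2]

lemma D2_val (i : Fin 4) {M : Type} [AddCommGroup M] [Module (RR K) M] (f : P1 K →ₗ[RR K] M) :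
    f (D2 K i) = ∑ j, ((if si j = i then tm K 1 (aw K (rev j)) else 0) • f (G1 K j)
    + (if ti j = i then tm K (aw K (rev j)) 1 else 0) • f (G1 K j)) := by
  rw [D2, map_sum]
  refine Finset.sum_congr rfl fun j _ => by rw [map_add, map_smul, map_smul]

lemma D2_val0 {M : Type} [AddCommGroup M] [Module (RR K) M] (f : P1 K →ₗ[RR K] M) :
    f (D2 K 0) = tm K (g K α) 1 • f (G1 K 1) + tm K 1 (g K β) • f (G1 K 0) := by
  rw [D2_val]
  simp [Fin.sum_univ_six, si, ti, aw, ar, rev]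
  abel

lemma D2_val1 {M : Type} [AddCommGroup M] [Module (RR K) M] (f : P1 K →ₗ[RR K] M) :
    f (D2 K 1) = tm K (g K ξ) 1 • f (G1 K 4) + tm K 1 (g K ε) • f (G1 K 5) := by
  rw [D2_val]
  simp [Fin.sum_univ_six, si, ti, aw, ar, rev]

lemma D2_val2 {M : Type} [AddCommGroup M] [Module (RR K) M] (f : P1 K →ₗ[RR K] M) :
    f (D2 K 2) = tm K (g K γ) 1 • f (G1 K 3) + tm K 1 (g K δ) • f (G1 K 2) := by
  rw [D2_val]
  simp [Fin.sum_univ_six, si, ti, aw, ar, rev]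
  abel

lemma D2_val3 {M : Type} [AddCommGroup M] [Module (RR K) M] (f : P1 K →ₗ[RR K] M) :
    f (D2 K 3) = (tm K (g K β) 1 • f (G1 K 0) + tm K 1 (g K α) • f (G1 K 1)) +
      (tm K (g K δ) 1 • f (G1 K 2) + tm K 1 (g K γ) • f (G1 K 3)) +
      (tm K (g K ε) 1 • f (G1 K 5) + tm K 1 (g K ξ) • f (G1 K 4)) := by
  rw [D2_val]
  simp [Fin.sum_univ_six, si, ti, aw, ar, rev]
  abel

lemma d1_D2 (i : Fin 4) : d1 K (D2 K i) = 0 := by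
  have G := g_rels K
  have e0 : d1 K (G1 K 0) = dD K (g K α) := d1_G1 K 0
  have e1 : d1 K (G1 K 1) = dD K (g K β) := d1_G1 K 1
  have e2 : d1 K (G1 K 2) = dD K (g K γ) := d1_G1 K 2
  have e3 : d1 K (G1 K 3) = dD K (g K δ) := d1_G1 K 3
  have e4 : d1 K (G1 K 4) = dD K (g K ε) := d1_G1 K 4
  have e5 : d1 K (G1 K 5) = dD K (g K ξ) := d1_G1 K 5
  fin_cases i
  · change d1 K (D2 K 0) = 0
    rw [D2_val0, e0, e1, ← dD_mul, G.r1, dD_zero]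
  · change d1 K (D2 K 1) = 0
    rw [D2_val1, e4, e5, ← dD_mul, G.r2, dD_zero]
  · change d1 K (D2 K 2) = 0
    rw [D2_val2, e2, e3, ← dD_mul, G.r3, dD_zero]
  · change d1 K (D2 K 3) = 0
    rw [D2_val3, e0, e1, e2, e3, e4, e5, ← dD_mul, ← dD_mul, ← dD_mul, ← dD_add, ← dD_add, G.r4,
      dD_zero]

lemma G1_smul (j : Fin 6) : u1 K j • G1 K j = G1 K j := PMgen_smul (hu1 K) j

lemma G1_left (j : Fin 6) : tm K (ev K (si j)) 1 • G1 K j = G1 K j := by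
  conv_lhs => rw [← G1_smul K j, u1, tm_smul_smul, ev_idem, mul_one]
  exact G1_smul K j

lemma G1_right (j : Fin 6) : tm K 1 (ev K (ti j)) • G1 K j = G1 K j := by
  conv_lhs => rw [← G1_smul K j, u1, tm_smul_smul, ev_idem, one_mul]
  exact G1_smul K j

lemma G0_smul (i : Fin 4) : tm K (ev K i) (ev K i) • G0 K i = G0 K i := PMgen_smul (hu0 K) i

lemma D2_left (i : Fin 4) : tm K (ev K i) 1 • D2 K i = D2 K i := by
  rw [D2, Finset.smul_sum]
  refine Finset.sum_congr rfl fun j _ => ?_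
  rw [smul_add]
  congr 1
  · split_ifs with h
    · subst h
      rw [tm_smul_smul, mul_one, mul_one]
      conv_rhs => rw [← G1_left K j, tm_smul_smul, one_mul, one_mul]
    · simp
  · split_ifs with h
    · subst h
      rw [tm_smul_smul, mul_one, ← si_rev, si_aw]
    · simp

lemma D2_right (i : Fin 4) : tm K 1 (ev K i) • D2 K i = D2 K i := by
  rw [D2, Finset.smul_sum]
  refine Finset.sum_congr rfl fun j _ => ?_
  rw [smul_add]
  congr 1
  · split_ifs with h
    · subst h
      rw [tm_smul_smul, mul_one, ← ti_rev, aw_ti]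
    · simp
  · split_ifs with h
    · subst h
      rw [tm_smul_smul, one_mul, one_mul]
      conv_rhs => rw [← G1_right K j, tm_smul_smul, mul_one, mul_one]
    · simp

lemma d2_G0 (i : Fin 4) : d2 K (G0 K i) = D2 K i := by
  rw [d2, G0, PMlift_gen, u0]
  have : tm K (ev K i) 1 • tm K 1 (ev K i) • D2 K i = tm K (ev K i) (ev K i) • D2 K i := by
    rw [tm_smul_smul, mul_one]
  rw [← this, D2_right, D2_left]

/-- values of the universal derivation -/
noncomputable def mC : QGen → (P1 K ⧸ LinearMap.range (d2 K))
  | .α => (LinearMap.range (d2 K)).mkQ (G1 K 0)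
  | .β => (LinearMap.range (d2 K)).mkQ (G1 K 1)
  | .γ => (LinearMap.range (d2 K)).mkQ (G1 K 2)
  | .δ => (LinearMap.range (d2 K)).mkQ (G1 K 3)
  | .ε => (LinearMap.range (d2 K)).mkQ (G1 K 4)
  | .ξ => (LinearMap.range (d2 K)).mkQ (G1 K 5)
  | _ => 0

lemma mC_ar (j : Fin 6) : mC K (ar j) = (LinearMap.range (d2 K)).mkQ (G1 K j) := by
  fin_cases j <;> rfl

lemma arrow_ex (a : QGen) (h : IsArrow a) : ∃ j, a = ar j := by
  rcases h with rfl | rfl | rfl | rfl | rfl | rfl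
  exacts [⟨0, rfl⟩, ⟨1, rfl⟩, ⟨2, rfl⟩, ⟨3, rfl⟩, ⟨4, rfl⟩, ⟨5, rfl⟩]

lemma mkQ_D2 (i : Fin 4) : (LinearMap.range (d2 K)).mkQ (D2 K i) = 0 := by
  rw [Submodule.mkQ_apply, Submodule.Quotient.mk_eq_zero]
  exact ⟨G0 K i, d2_G0 K i⟩

lemma exact_P1 : Function.Exact (d2 K) (d1 K) := by
  intro v
  constructor
  · intro hv
    obtain ⟨D, hD, hmul⟩ := exists_deriv K (M := P1 K ⧸ LinearMap.range (d2 K)) (mC K)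
      (by rintro v (rfl | rfl | rfl | rfl) <;> rfl)
      (by
        intro a ha
        obtain ⟨j, rfl⟩ := arrow_ex a ha
        rw [mC_ar, ← map_smul, src_ar, G1_left])
      (by
        intro a ha
        obtain ⟨j, rfl⟩ := arrow_ex a ha
        rw [mC_ar, ← map_smul, tgt_ar, G1_right])
      (by have h := mkQ_D2 K 0; rw [D2_val0 K (LinearMap.range (d2 K)).mkQ] at h; exact h)
      (by have h := mkQ_D2 K 1; rw [D2_val1 K (LinearMap.range (d2 K)).mkQ] at h; exact h)
      (by have h := mkQ_D2 K 2; rw [D2_val2 K (LinearMap.range (d2 K)).mkQ] at h; exact h)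
      (by have h := mkQ_D2 K 3; rw [D2_val3 K (LinearMap.range (d2 K)).mkQ] at h; exact h)
    obtain ⟨S, hS⟩ := exists_S K D
    let s : P0 K →+ (P1 K ⧸ LinearMap.range (d2 K)) :=
      { toFun := fun v => ∑ i, S (v.val i)
        map_zero' := by simp
        map_add' := by intro v w; simp [Finset.sum_add_distrib] }
    have hs : ∀ x y z w, s (tm K x y • tm K z w • GG K) = ∑ i, tm K 1 (ev K i * w * y) • D (x * z * ev K i) := by
      intro x y z w
      change ∑ i, S (PM.val (tm K x y • tm K z w • GG K) i) = _
      refine Finset.sum_congr rfl fun i _ => ?_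
      have : (GG K).val i = tm K (ev K i) (ev K i) := by
        rw [GG, map_sum, Finset.sum_apply]
        simp [G0_val, u0]
      rw [map_smul, map_smul, Pi.smul_apply, Pi.smul_apply, this, smul_eq_mul, smul_eq_mul, tm_mul,
        tm_mul, hS, mul_assoc, mul_assoc]
    have hev : ∀ i, D (ev K i) = 0 := by
      intro i
      rw [hD]
      fin_cases i <;> rfl
    have hsum : ∀ x y, ∑ i, tm K 1 (ev K i * y) • D (x * ev K i) = tm K 1 y • D x := by
      intro x y
      have : ∀ i, tm K 1 (ev K i * y) • D (x * ev K i) = tm K 1 (ev K i * y) • D x := by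
        intro i
        rw [hmul, hev, smul_zero, zero_add, tm_smul_smul, ← mul_assoc, ev_idem, mul_one]
      rw [Finset.sum_congr rfl fun i _ => this i, ← Finset.sum_smul, ← tm_sum_right,
        ← Finset.sum_mul, ev_sum, one_mul]
    have key : ∀ j (r : RR K), s (r • D1 K j) = r • (LinearMap.range (d2 K)).mkQ (G1 K j) := by
      intro j r
      refine RR_induction K (fun r => s (r • D1 K j) = r • (LinearMap.range (d2 K)).mkQ (G1 K j))
        ?_ ?_ ?_ r
      · rw [zero_smul, zero_smul, map_zero]
      · intro x y
        rw [D1, smul_add, map_add, hs, hs]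
        simp only [mul_one, mul_assoc (ev K _)]
        rw [hsum, hsum, hmul, hD, mC_ar, smul_add, tm_smul_smul, tm_smul_smul]
        simp only [one_mul, mul_one]
        rw [add_assoc, RR_add_self K, add_zero]
      · intro x y hx hy
        rw [add_smul, add_smul, map_add, hx, hy]
    have h1 : s (d1 K v) = (LinearMap.range (d2 K)).mkQ v := by
      rw [PM_hom (hu1 K) (d1 K) v, PM_hom (hu1 K) (LinearMap.range (d2 K)).mkQ v, map_sum]
      refine Finset.sum_congr rfl fun j _ => ?_
      have e : d1 K (PMgen (u1 K) (hu1 K) j) = D1 K j := d1_G1 K j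
      have hk := key j (v.val j)
      rw [e]
      exact hk
    rw [hv, map_zero] at h1
    exact (Submodule.Quotient.mk_eq_zero _).1 h1.symm
  · rintro ⟨w, rfl⟩
    rw [PM_hom (hu0 K) (d2 K) w, map_sum]
    refine Finset.sum_eq_zero fun j _ => ?_
    rw [map_smul]
    have : d2 K (PMgen (u0 K) (hu0 K) j) = D2 K j := d2_G0 K j
    rw [this, d1_D2, smul_zero]

end


/-! ### Dimensions and the kernel of `d2` -/

section
variable [CharP K 2]

def tI (k : Fin 28) : Fin 4 :=
  [0,1,2,3,3,0,3,2,1,3,2,1,0,1,0,2,3,3,3,3,3,0,2,1,0,1,2,3].getD k 0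
def sI (k : Fin 28) : Fin 4 :=
  [0,1,2,3,0,3,2,3,3,1,0,0,2,2,1,1,3,3,0,2,1,3,3,3,0,1,2,3].getD k 0
def dual (k : Fin 28) : Fin 28 :=
  [24,25,26,27,21,18,22,19,20,23,12,14,10,15,11,13,17,16,5,7,8,4,6,9,0,1,2,3].getD k 0
def iv (i : Fin 4) : Fin 28 := Fin.castLE (by norm_num) i
def ia (j : Fin 6) : Fin 28 := ⟨j.1 + 4, by omega⟩

lemma ev_b (i : Fin 4) : ev K i = b K (iv i) := by
  fin_cases i <;> simp [b, word, wordTbl, iv] <;> rfl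

lemma aw_b (j : Fin 6) : aw K j = b K (ia j) := by
  fin_cases j <;> simp [b, word, wordTbl, ia] <;> rfl

lemma b_ev (k : Fin 28) (i : Fin 4) : b K k * ev K i = if tI k = i then b K k else 0 := by
  have h : parEq (mulL k (iv i)) (if tI k = i then [k] else []) := by
    revert k i; decide +kernel
  rw [ev_b, b_mul_b, bsum_par K h]
  split_ifs <;> simp [bsum]

lemma ev_bb (k : Fin 28) (i : Fin 4) : ev K i * b K k = if sI k = i then b K k else 0 := by
  have h : parEq (mulL (iv i) k) (if sI k = i then [k] else []) := by
    revert k i; decide +kernel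
  rw [ev_b, b_mul_b, bsum_par K h]
  split_ifs <;> simp [bsum]

/-- basis of the enveloping algebra -/
noncomputable def bR : Module.Basis (Fin 28 × Fin 28) K (RR K) :=
  ((bA K).tensorProduct ((bA K).map (MulOpposite.opLinearEquiv K)) :
    Module.Basis (Fin 28 × Fin 28) K (AA K ⊗[K] (AA K)ᵐᵒᵖ))

lemma bR_apply (p : Fin 28 × Fin 28) : bR K p = tm K (b K p.1) (b K p.2) := by
  have : bR K p = tm K (bA K p.1) (bA K p.2) := Module.Basis.tensorProduct_apply' _ _ p
  rw [this, bA_apply, bA_apply]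

section
variable {n : ℕ} (s t : Fin n → Fin 4) (u : Fin n → RR K)

noncomputable def Eop : (Fin n → RR K) →ₗ[K] (Fin n → RR K) where
  toFun v i := v i * u i
  map_add' v w := by funext i; simp [add_mul]
  map_smul' r v := by funext i; simp

lemma finrank_PM (hu : ∀ i, u i = tm K (ev K (s i)) (ev K (t i))) :
    Module.finrank K (PM u) =
      Fintype.card {j : (Σ _ : Fin n, Fin 28 × Fin 28) // tI j.2.1 = s j.1 ∧ sI j.2.2 = t j.1} := by
  have := finrank_fixed K (Pi.basis fun _ : Fin n => bR K)
    (fun j => tI j.2.1 = s j.1 ∧ sI j.2.2 = t j.1) (Eop K u) ?_ ((PS u).restrictScalars K) ?_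
  · exact this
  · rintro ⟨i, k, l⟩
    rw [Pi.basis_apply, bR_apply]
    funext j
    by_cases h : j = i
    · subst h
      simp only [Eop, LinearMap.coe_mk, AddHom.coe_mk, Pi.single_eq_same, hu, tm_mul, b_ev, ev_bb]
      by_cases h1 : tI k = s j <;> by_cases h2 : sI l = t j <;>
        simp [h1, h2, tm_zero_left, tm_zero_right]
    · simp only [Eop, LinearMap.coe_mk, AddHom.coe_mk]
      split_ifs <;> simp [h]
  · intro v
    constructor
    · intro h; funext i; exact h i
    · intro h i; exact congrFun h i

instance : Module.Finite K (RR K) := Module.Finite.of_basis (bR K)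
instance : Module.Finite K (AA K) := Module.Finite.of_basis (bA K)
instance : Module.Finite K (PM u) :=
  inferInstanceAs (Module.Finite K ((PS u).restrictScalars K))
end

lemma finrank_P0 : Module.finrank K (P0 K) = 208 := by
  rw [finrank_PM K (fun i => i) (fun i => i) (u0 K) (fun i => rfl)]
  decide +kernel

lemma finrank_P1 : Module.finrank K (P1 K) = 360 := by
  rw [finrank_PM K si ti (u1 K) (fun i => rfl)]
  decide +kernel

lemma finrank_AA : Module.finrank K (AA K) = 28 := by
  rw [Module.finrank_eq_card_basis (bA K)]; rfl

instance : IsScalarTower K (RR K) (AA K) where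
  smul_assoc r s m := by
    refine RR_induction K (fun s => (r • s) • m = r • s • m) ?_ ?_ ?_ s
    · rw [smul_zero, zero_smul, smul_zero]
    · intro x y
      rw [← tm_smul_left, tm_smul, tm_smul, smul_mul_assoc, smul_mul_assoc]
    · intro x y hx hy
      rw [smul_add, add_smul, hx, hy, add_smul, smul_add]

lemma finrank_ker : Module.finrank K (LinearMap.ker ((d2 K).restrictScalars K)) = 28 := by
  have e2 := LinearMap.finrank_range_add_finrank_ker ((d2 K).restrictScalars K)
  have e1 := LinearMap.finrank_range_add_finrank_ker ((d1 K).restrictScalars K)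
  have e0 := LinearMap.finrank_range_add_finrank_ker ((pmap K).restrictScalars K)
  have h0 : LinearMap.range ((pmap K).restrictScalars K) = ⊤ :=
    LinearMap.range_eq_top.2 (pmap_surj K)
  have h1 : LinearMap.ker ((pmap K).restrictScalars K) = LinearMap.range ((d1 K).restrictScalars K) := by
    ext v; exact exact_P0 K v
  have h2 : LinearMap.ker ((d1 K).restrictScalars K) = LinearMap.range ((d2 K).restrictScalars K) := by
    ext v; exact exact_P1 K v
  rw [finrank_P0] at e2 e0
  rw [finrank_P1] at e1
  rw [h0, finrank_top, finrank_AA, h1] at e0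
  rw [h2] at e1
  omega

end


section
variable [CharP K 2]

noncomputable def rsum (L : List (Fin 28 × Fin 28)) : RR K :=
  (L.map fun p => tm K (b K p.1) (b K p.2)).sum

lemma rsum_nil : rsum K [] = 0 := by simp [rsum]
lemma rsum_cons (p : Fin 28 × Fin 28) (L) :
    rsum K (p :: L) = tm K (b K p.1) (b K p.2) + rsum K L := by simp [rsum]
lemma rsum_append (L L') : rsum K (L ++ L') = rsum K L + rsum K L' := by simp [rsum]

lemma rsum_eq (L) : rsum K L = ∑ p, (L.count p : K) • tm K (b K p.1) (b K p.2) := by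
  induction L with
  | nil => simp [rsum_nil]
  | cons q L ih =>
    rw [rsum_cons, ih]
    simp only [List.count_cons, Nat.cast_add, add_smul, Finset.sum_add_distrib]
    rw [add_comm]
    refine congrArg (HAdd.hAdd _) ?_
    symm
    rw [Finset.sum_eq_single q]
    · simp
    · intro p _ h
      simp [Ne.symm h]
    · simp

def parEq2 (L L' : List (Fin 28 × Fin 28)) : Prop := ∀ p : Fin 28 × Fin 28, L.count p % 2 = L'.count p % 2

instance (L L' : List (Fin 28 × Fin 28)) : Decidable (parEq2 L L') := by unfold parEq2; infer_instance

lemma rsum_par {L L'} (h : parEq2 L L') : rsum K L = rsum K L' := by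
  rw [rsum_eq, rsum_eq]
  refine Finset.sum_congr rfl fun p _ => ?_
  rw [(CharP.natCast_eq_natCast K 2).2 (h p)]

lemma bsum_cons (k l) : bsum K (k :: l) = b K k + bsum K l := by simp [bsum]
lemma bsum_append (l l') : bsum K (l ++ l') = bsum K l + bsum K l' := by simp [bsum]
lemma bsum_nil : bsum K [] = 0 := by simp [bsum]

def prodL (l l' : List (Fin 28)) : List (Fin 28 × Fin 28) := l.flatMap fun x => l'.map fun y => (x, y)

lemma tm_b_bsum (k l) : tm K (b K k) (bsum K l) = rsum K (l.map fun y => (k, y)) := by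
  induction l with
  | nil => rw [bsum_nil, tm_zero_right]; exact (rsum_nil K).symm
  | cons x l ih => rw [bsum_cons, tm_add_right, List.map_cons, rsum_cons, ih]

lemma tm_bsum (l l') : tm K (bsum K l) (bsum K l') = rsum K (prodL l l') := by
  induction l with
  | nil => rw [bsum_nil, tm_zero_left]; exact (rsum_nil K).symm
  | cons x l ih =>
    rw [bsum_cons, tm_add_left, ih, tm_b_bsum, ← rsum_append]; rfl

lemma bsum_mul_b (l k) : bsum K l * b K k = bsum K (l.flatMap fun q => mulL q k) := by
  induction l with
  | nil => rw [bsum_nil, zero_mul]; exact (bsum_nil K).symm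
  | cons x l ih => rw [bsum_cons, add_mul, ih, b_mul_b, ← bsum_append]; rfl

def rmul (L : List (Fin 28 × Fin 28)) (l l' : List (Fin 28)) : List (Fin 28 × Fin 28) :=
  L.flatMap fun p => prodL (act (word p.1) l) (l'.flatMap fun q => mulL q p.2)

lemma rsum_mul (L l l') : rsum K L * tm K (bsum K l) (bsum K l') = rsum K (rmul L l l') := by
  induction L with
  | nil => rw [rsum_nil, zero_mul]; exact (rsum_nil K).symm
  | cons p L ih =>
    rw [rsum_cons, add_mul, ih, tm_mul, b_mul_bsum, bsum_mul_b, tm_bsum, ← rsum_append]; rfl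

def wL (i : Fin 4) : List (Fin 28 × Fin 28) :=
  ((List.finRange 28).filter fun k => tI k = i).map fun k => (k, dual k)

noncomputable def om : P0 K := PM.mk (u0 K) (fun i => rsum K (wL i)) fun i => by
  have h : parEq2 (rmul (wL i) [iv i] [iv i]) (wL i) := by revert i; decide +kernel
  rw [u0, ev_b, ← bsum_single, rsum_mul, rsum_par K h]

lemma om_val (i : Fin 4) : (om K).val i = rsum K (wL i) := rfl

lemma d2_om : d2 K (om K) = 0 := by
  have h : d2 K (om K) = ∑ j, (rsum K (wL (si j)) * tm K 1 (aw K (rev j)) +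
      rsum K (wL (ti j)) * tm K (aw K (rev j)) 1) • G1 K j := by
    rw [d2, PMlift_apply]
    simp only [D2, om_val, Finset.smul_sum]
    rw [Finset.sum_comm]
    refine Finset.sum_congr rfl fun j _ => ?_
    simp only [smul_add, Finset.sum_add_distrib, smul_smul, add_smul]
    congr 1
    · rw [Finset.sum_eq_single (si j)]
      · rw [if_pos rfl]
      · intro i _ hi; rw [if_neg (Ne.symm hi), mul_zero, zero_smul]
      · simp
    · rw [Finset.sum_eq_single (ti j)]
      · rw [if_pos rfl]
      · intro i _ hi; rw [if_neg (Ne.symm hi), mul_zero, zero_smul]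
      · simp
  rw [h]
  refine Finset.sum_eq_zero fun j _ => ?_
  have hp : parEq2 (rmul (wL (si j)) [0,1,2,3] [ia (rev j)] ++ rmul (wL (ti j)) [ia (rev j)] [0,1,2,3]) [] := by
    revert j; decide +kernel
  rw [aw_b, one_eq, ← bsum_single, rsum_mul, rsum_mul, ← rsum_append, rsum_par K hp, rsum_nil, zero_smul]

noncomputable def lam : AA K →ₗ[K] K :=
  (∑ i ∈ ({24, 25, 26, 27} : Finset (Fin 28)), LinearMap.proj (R := K) (φ := fun _ : Fin 28 => K) i) ∘ₗ phi K

lemma lam_b (k : Fin 28) : lam K (b K k) = if 24 ≤ k then 1 else 0 := by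
  rw [lam, LinearMap.comp_apply, phi_b, LinearMap.sum_apply]
  fin_cases k <;> simp [Pi.single_apply]

/-- contraction with the Frobenius form -/
lemma exists_Lam : ∃ L : RR K →+ AA K, ∀ x y, L (tm K x y) = lam K y • x := by
  let B : AA K →ₗ[K] (AA K)ᵐᵒᵖ →ₗ[K] AA K := LinearMap.mk₂ K (fun x y => lam K y.unop • x)
    (by intro x x' y; simp only [smul_add])
    (by intro r x y; rw [smul_comm])
    (by intro x y y'; simp only [MulOpposite.unop_add, map_add, add_smul])
    (by intro r x y; simp only [MulOpposite.unop_smul, map_smul, smul_eq_mul, mul_smul])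
  exact ⟨(TensorProduct.lift B).toAddMonoidHom, fun x y => rfl⟩

lemma om_inj (a : AA K) (h : tm K a 1 • om K = 0) : a = 0 := by
  obtain ⟨L, hL⟩ := exists_Lam K
  have hm : ∀ r, L (tm K a 1 * r) = a * L r := by
    intro r
    refine RR_induction K (fun r => L (tm K a 1 * r) = a * L r) ?_ ?_ ?_ r
    · simp
    · intro x y; rw [tm_mul, hL, hL, mul_one, mul_smul_comm]
    · intro x y hx hy; rw [mul_add, map_add, hx, hy, map_add, mul_add]
  have hw : ∀ i, L (rsum K (wL i)) = ev K i := by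
    intro i
    rw [ev_b, rsum, map_list_sum, List.map_map]
    have : ((⇑L ∘ fun p => tm K (b K p.1) (b K p.2)) : Fin 28 × Fin 28 → AA K)
        = fun p => (if 24 ≤ p.2 then (1:K) else 0) • b K p.1 := by
      funext p; rw [Function.comp_apply, hL, lam_b]
    rw [this]
    fin_cases i
    · rw [show wL _ = [(0,24),(5,18),(12,10),(14,11),(21,4),(24,0)] by decide +kernel]; simp; rfl
    · rw [show wL _ = [(1,25),(8,20),(11,14),(13,15),(23,9),(25,1)] by decide +kernel]; simp; rfl
    · rw [show wL _ = [(2,26),(7,19),(10,12),(15,13),(22,6),(26,2)] by decide +kernel]; simp; rfl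
    · rw [show wL _ = [(3,27),(4,21),(6,22),(9,23),(16,17),(17,16),(18,5),(19,7),(20,8),(27,3)] by
        decide +kernel]; simp; rfl
  have : ∀ i, a * ev K i = 0 := by
    intro i
    have h1 : (tm K a 1 • om K).val i = 0 := by rw [h]; rfl
    rw [map_smul, Pi.smul_apply, om_val, smul_eq_mul] at h1
    rw [← hw, ← hm, h1, map_zero]
  rw [← mul_one a, ← ev_sum, Finset.mul_sum]
  exact Finset.sum_eq_zero fun i _ => this i

lemma ker_d2 (v : P0 K) (hv : d2 K v = 0) : ∃ a, tm K a 1 • om K = v := by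
  let F : AA K →ₗ[K] LinearMap.ker ((d2 K).restrictScalars K) :=
    { toFun := fun a => ⟨tm K a 1 • om K, by
        change d2 K (tm K a 1 • om K) = 0
        rw [map_smul, d2_om, smul_zero]⟩
      map_add' := fun x y => Subtype.ext (tm_add_smul_left K x y 1 (om K))
      map_smul' := fun r x => Subtype.ext (tm_smulK_left K r x 1 (om K)) }
  have hF : Function.Injective F := by
    rw [injective_iff_map_eq_zero]
    intro a ha
    exact om_inj K a (congrArg Subtype.val ha)
  have hs : Function.Surjective F :=
    (LinearMap.injective_iff_surjective_of_finrank_eq_finrank (by rw [finrank_ker, finrank_AA])).1 hF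
  obtain ⟨a, ha⟩ := hs ⟨v, hv⟩
  exact ⟨a, congrArg Subtype.val ha⟩

end


/-! ### The final computation -/

section
variable [CharP K 2]

lemma psi_phi (x : AA K) : psi K (phi K x) = x := by
  obtain ⟨v, rfl⟩ := LinearMap.range_eq_top.1 (psi_surj K) x
  rw [phi_psi]

lemma expand (x : AA K) : x = ∑ k, phi K x k • b K k := by
  conv_lhs => rw [← psi_phi K x]
  rw [psi, Module.Basis.constr_apply_fintype]
  simp

lemma expand_loop (s t : Fin 4) (x : AA K) (h : ev K s * x * ev K t = x) (F : Finset (Fin 28))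
    (hF : (Finset.univ.filter fun k => sI k = s ∧ tI k = t) = F) :
    x = ∑ k ∈ F, phi K x k • b K k := by
  subst hF
  conv_lhs => rw [← h, expand K x, Finset.mul_sum, Finset.sum_mul]
  rw [Finset.sum_filter]
  refine Finset.sum_congr rfl fun k _ => ?_
  rw [mul_smul_comm, smul_mul_assoc, ev_bb]
  by_cases h1 : sI k = s <;> by_cases h2 : tI k = t <;> simp [h1, h2, b_ev]

lemma G0_loop (f : P0 K →ₗ[RR K] AA K) (i : Fin 4) :
    ev K i * f (G0 K i) * ev K i = f (G0 K i) := by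
  rw [← tm_smul, ← map_smul, G0_smul]

lemma G1_loop (f : P1 K →ₗ[RR K] AA K) (j : Fin 6) :
    ev K (si j) * f (G1 K j) * ev K (ti j) = f (G1 K j) := by
  rw [← tm_smul, ← map_smul]
  exact congrArg f (G1_smul K j)

lemma m0_eq (f : P0 K →ₗ[RR K] AA K) : f (G0 K 0) =
    phi K (f (G0 K 0)) 0 • b K 0 + phi K (f (G0 K 0)) 24 • b K 24 := by
  have := expand_loop K 0 0 _ (G0_loop K f 0) {0, 24} (by decide +kernel)
  rwa [Finset.sum_pair (by decide)] at this
lemma m1_eq (f : P0 K →ₗ[RR K] AA K) : f (G0 K 1) =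
    phi K (f (G0 K 1)) 1 • b K 1 + phi K (f (G0 K 1)) 25 • b K 25 := by
  have := expand_loop K 1 1 _ (G0_loop K f 1) {1, 25} (by decide +kernel)
  rwa [Finset.sum_pair (by decide)] at this
lemma m2_eq (f : P0 K →ₗ[RR K] AA K) : f (G0 K 2) =
    phi K (f (G0 K 2)) 2 • b K 2 + phi K (f (G0 K 2)) 26 • b K 26 := by
  have := expand_loop K 2 2 _ (G0_loop K f 2) {2, 26} (by decide +kernel)
  rwa [Finset.sum_pair (by decide)] at this
lemma m3_eq (f : P0 K →ₗ[RR K] AA K) : f (G0 K 3) =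
    phi K (f (G0 K 3)) 3 • b K 3 + (phi K (f (G0 K 3)) 16 • b K 16 +
      (phi K (f (G0 K 3)) 17 • b K 17 + phi K (f (G0 K 3)) 27 • b K 27)) := by
  have := expand_loop K 3 3 _ (G0_loop K f 3) {3, 16, 17, 27} (by decide +kernel)
  rwa [Finset.sum_insert (by decide), Finset.sum_insert (by decide), Finset.sum_pair (by decide)] at this

lemma n_eq (h : P1 K →ₗ[RR K] AA K) (j : Fin 6) (k l : Fin 28) (hkl : k ≠ l)
    (hF : (Finset.univ.filter fun x => sI x = si j ∧ tI x = ti j) = {k, l}) :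
    h (G1 K j) = phi K (h (G1 K j)) k • b K k + phi K (h (G1 K j)) l • b K l := by
  have := expand_loop K (si j) (ti j) _ (G1_loop K h j) {k, l} hF
  rwa [Finset.sum_pair hkl] at this

def conj (L : List (Fin 28 × Fin 28)) (k : Fin 28) : List (Fin 28) :=
  L.flatMap fun p => act (word p.1) (mulL k p.2)

lemma rsum_smul_b (L k) : rsum K L • b K k = bsum K (conj L k) := by
  induction L with
  | nil => rw [rsum_nil, zero_smul]; exact (bsum_nil K).symm
  | cons p L ih =>
    rw [rsum_cons, add_smul, ih, tm_smul, mul_assoc, b_mul_b, b_mul_bsum, ← bsum_append]; rfl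

lemma conj_eq {L k} (l : List (Fin 28)) (h : parEq (conj L k) l) : rsum K L • b K k = bsum K l := by
  rw [rsum_smul_b, bsum_par K h]

lemma RR_smul_smul (r : RR K) (c : K) (x : AA K) : r • c • x = c • r • x := by
  rw [← algebraMap_smul (RR K) c x, ← algebraMap_smul (RR K) c (r • x), smul_smul, smul_smul,
    Algebra.commutes]

lemma f_om (f : P0 K →ₗ[RR K] AA K) : f (om K) = phi K (f (G0 K 0)) 0 • (b K 25 + b K 26) +
    phi K (f (G0 K 1)) 1 • (b K 24 + b K 26) + phi K (f (G0 K 2)) 2 • (b K 24 + b K 25) := by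
  have h := PM_hom (hu0 K) f (om K)
  rw [Fin.sum_univ_four] at h
  simp only [om_val] at h
  change f (om K) = rsum K (wL 0) • f (G0 K 0) + rsum K (wL 1) • f (G0 K 1) +
    rsum K (wL 2) • f (G0 K 2) + rsum K (wL 3) • f (G0 K 3) at h
  rw [h]
  conv_lhs => rw [m0_eq K f, m1_eq K f, m2_eq K f, m3_eq K f]
  simp only [smul_add, RR_smul_smul]
  rw [conj_eq K (L := wL 0) (k := 0) [25, 26] (by decide +kernel),
    conj_eq K (L := wL 0) (k := 24) [] (by decide +kernel),
    conj_eq K (L := wL 1) (k := 1) [24, 26] (by decide +kernel),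
    conj_eq K (L := wL 1) (k := 25) [] (by decide +kernel),
    conj_eq K (L := wL 2) (k := 2) [24, 25] (by decide +kernel),
    conj_eq K (L := wL 2) (k := 26) [] (by decide +kernel),
    conj_eq K (L := wL 3) (k := 3) [] (by decide +kernel),
    conj_eq K (L := wL 3) (k := 16) [] (by decide +kernel),
    conj_eq K (L := wL 3) (k := 17) [] (by decide +kernel),
    conj_eq K (L := wL 3) (k := 27) [] (by decide +kernel)]
  simp [bsum_cons, bsum_nil]

lemma kills_iff (f : P0 K →ₗ[RR K] AA K) : (∀ x, d2 K x = 0 → f x = 0) ↔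
    phi K (f (G0 K 0)) 0 = phi K (f (G0 K 1)) 1 ∧ phi K (f (G0 K 0)) 0 = phi K (f (G0 K 2)) 2 := by
  constructor
  · intro h
    have h1 := h _ (d2_om K)
    rw [f_om] at h1
    have h24 := congrFun (congrArg (phi K) h1) 25
    have h26 := congrFun (congrArg (phi K) h1) 26
    simp [phi_b] at h24 h26
    exact ⟨CharTwo.add_eq_zero.1 h26, CharTwo.add_eq_zero.1 h24⟩
  · rintro ⟨h1, h2⟩ x hx
    obtain ⟨a, rfl⟩ := ker_d2 K x hx
    rw [map_smul, f_om, ← h1, ← h2]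
    have : phi K (f (G0 K 0)) 0 • (b K 25 + b K 26) + phi K (f (G0 K 0)) 0 • (b K 24 + b K 26) +
        phi K (f (G0 K 0)) 0 • (b K 24 + b K 25) = 0 := by
      rw [← smul_add, ← smul_add]
      have : b K 25 + b K 26 + (b K 24 + b K 26) + (b K 24 + b K 25) =
        (b K 25 + b K 25) + (b K 26 + b K 26) + (b K 24 + b K 24) := by abel
      simp only [this, add_self', add_zero, smul_zero]
    rw [this, smul_zero]

noncomputable def tt : (P0 K →ₗ[RR K] AA K) →+ (Fin 3 → K) where
  toFun f := ![phi K (f (G0 K 0)) 0, phi K (f (G0 K 3)) 3,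
    phi K (f (G0 K 0)) 24 + phi K (f (G0 K 1)) 25 + phi K (f (G0 K 2)) 26 + phi K (f (G0 K 3)) 27]
  map_zero' := by
    funext i; fin_cases i <;> simp
  map_add' f g := by
    funext i; fin_cases i
    · simp
    · simp
    · simp; abel

lemma tt_apply (f) : tt K f = ![phi K (f (G0 K 0)) 0, phi K (f (G0 K 3)) 3,
    phi K (f (G0 K 0)) 24 + phi K (f (G0 K 1)) 25 + phi K (f (G0 K 2)) 26 +
      phi K (f (G0 K 3)) 27] := rfl

lemma tt_smul (k : K) (f g : P0 K →ₗ[RR K] AA K) (h : ∀ x, g x = algebraMap K (RR K) k • f x) :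
    tt K g = k • tt K f := by
  rw [tt_apply, tt_apply]
  simp only [h, algebraMap_smul, map_smul, Pi.smul_apply]
  funext i; fin_cases i
  · simp
  · simp
  · simp [mul_add]

lemma lift_G0 (m : Fin 4 → AA K) (i : Fin 4) :
    PMlift (u0 K) m (G0 K i) = ev K i * m i * ev K i := by
  rw [G0, PMlift_gen, u0, tm_smul]

lemma lift_G1 (m : Fin 6 → AA K) (j : Fin 6) :
    PMlift (u1 K) m (G1 K j) = ev K (si j) * m j * ev K (ti j) := by
  rw [G1, PMlift_gen, u1, tm_smul]

lemma ev_b_ev (s t : Fin 4) (k : Fin 28) (h1 : sI k = s) (h2 : tI k = t) :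
    ev K s * b K k * ev K t = b K k := by
  rw [ev_bb, if_pos h1, b_ev, if_pos h2]

lemma tt_surj (v : Fin 3 → K) : ∃ f : P0 K →ₗ[RR K] AA K,
    (∀ x, d2 K x = 0 → f x = 0) ∧ tt K f = v := by
  let m : Fin 4 → AA K := ![v 0 • b K 0 + v 2 • b K 24, v 0 • b K 1, v 0 • b K 2, v 1 • b K 3]
  have h0 : PMlift (u0 K) m (G0 K 0) = v 0 • b K 0 + v 2 • b K 24 := by
    rw [lift_G0]
    change ev K 0 * (v 0 • b K 0 + v 2 • b K 24) * ev K 0 = _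
    rw [mul_add, add_mul, mul_smul_comm, mul_smul_comm, smul_mul_assoc, smul_mul_assoc,
      ev_b_ev K 0 0 0 rfl rfl, ev_b_ev K 0 0 24 rfl rfl]
  have h1 : PMlift (u0 K) m (G0 K 1) = v 0 • b K 1 := by
    rw [lift_G0]
    change ev K 1 * (v 0 • b K 1) * ev K 1 = _
    rw [mul_smul_comm, smul_mul_assoc, ev_b_ev K 1 1 1 rfl rfl]
  have h2 : PMlift (u0 K) m (G0 K 2) = v 0 • b K 2 := by
    rw [lift_G0]
    change ev K 2 * (v 0 • b K 2) * ev K 2 = _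
    rw [mul_smul_comm, smul_mul_assoc, ev_b_ev K 2 2 2 rfl rfl]
  have h3 : PMlift (u0 K) m (G0 K 3) = v 1 • b K 3 := by
    rw [lift_G0]
    change ev K 3 * (v 1 • b K 3) * ev K 3 = _
    rw [mul_smul_comm, smul_mul_assoc, ev_b_ev K 3 3 3 rfl rfl]
  refine ⟨PMlift (u0 K) m, ?_, ?_⟩
  · rw [kills_iff, h0, h1, h2]
    simp [phi_b]
  · rw [tt_apply, h0, h1, h2, h3]
    funext i; fin_cases i <;> simp [phi_b]

lemma P0_hom_ext (f f' : P0 K →ₗ[RR K] AA K) (h : ∀ i, f (G0 K i) = f' (G0 K i)) : f = f' := by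
  refine LinearMap.ext fun v => ?_
  rw [PM_hom (hu0 K) f v, PM_hom (hu0 K) f' v]
  exact Finset.sum_congr rfl fun i _ => congrArg _ (h i)

lemma bm {k l : Fin 28} (L : List (Fin 28)) (h : parEq (mulL k l) L) : b K k * b K l = bsum K L := by
  rw [b_mul_b, bsum_par K h]

lemma gb : g K α = b K 4 ∧ g K β = b K 5 ∧ g K γ = b K 6 ∧ g K δ = b K 7 ∧ g K ε = b K 8 ∧
    g K ξ = b K 9 := ⟨aw_b K 0, aw_b K 1, aw_b K 2, aw_b K 3, aw_b K 4, aw_b K 5⟩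

lemma cob (h : P1 K →ₗ[RR K] AA K) (n : Fin 6 → AA K) (hn : ∀ j, h (G1 K j) = n j) :
    h (D2 K 0) = b K 4 * n 1 + n 0 * b K 5 ∧
    h (D2 K 1) = b K 9 * n 4 + n 5 * b K 8 ∧
    h (D2 K 2) = b K 6 * n 3 + n 2 * b K 7 ∧
    h (D2 K 3) = (b K 5 * n 0 + n 1 * b K 4) + (b K 7 * n 2 + n 3 * b K 6) +
      (b K 8 * n 5 + n 4 * b K 9) := by
  obtain ⟨ga, gb, gc, gd, ge, gx⟩ := gb K
  refine ⟨?_, ?_, ?_, ?_⟩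
  · rw [D2_val0]; simp only [tm_smul, hn, one_mul, mul_one, ga, gb, gc, gd, ge, gx]
  · rw [D2_val1]; simp only [tm_smul, hn, one_mul, mul_one, ga, gb, gc, gd, ge, gx]
  · rw [D2_val2]; simp only [tm_smul, hn, one_mul, mul_one, ga, gb, gc, gd, ge, gx]
  · rw [D2_val3]; simp only [tm_smul, hn, one_mul, mul_one, ga, gb, gc, gd, ge, gx]

lemma mt1 : b K 4 * b K 5 = 0 ∧ b K 4 * b K 21 = b K 24 ∧ b K 18 * b K 5 = b K 24 ∧
    b K 5 * b K 4 = b K 16 ∧ b K 5 * b K 18 = b K 27 ∧ b K 21 * b K 4 = b K 27 := by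
  refine ⟨?_, ?_, ?_, ?_, ?_, ?_⟩
  · rw [bm K [] (by decide +kernel), bsum_nil]
  · rw [bm K [24] (by decide +kernel), bsum_single]
  · rw [bm K [24] (by decide +kernel), bsum_single]
  · rw [bm K [16] (by decide +kernel), bsum_single]
  · rw [bm K [27] (by decide +kernel), bsum_single]
  · rw [bm K [27] (by decide +kernel), bsum_single]

lemma mt2 : b K 6 * b K 7 = 0 ∧ b K 6 * b K 22 = b K 26 ∧ b K 19 * b K 7 = b K 26 ∧
    b K 7 * b K 6 = b K 17 ∧ b K 7 * b K 19 = b K 27 ∧ b K 22 * b K 6 = b K 27 := by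
  refine ⟨?_, ?_, ?_, ?_, ?_, ?_⟩
  · rw [bm K [] (by decide +kernel), bsum_nil]
  · rw [bm K [26] (by decide +kernel), bsum_single]
  · rw [bm K [26] (by decide +kernel), bsum_single]
  · rw [bm K [17] (by decide +kernel), bsum_single]
  · rw [bm K [27] (by decide +kernel), bsum_single]
  · rw [bm K [27] (by decide +kernel), bsum_single]

lemma mt3 : b K 9 * b K 8 = 0 ∧ b K 9 * b K 23 = b K 25 ∧ b K 20 * b K 8 = b K 25 ∧
    b K 8 * b K 9 = b K 16 + b K 17 ∧ b K 8 * b K 20 = b K 27 ∧ b K 23 * b K 9 = b K 27 := by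
  refine ⟨?_, ?_, ?_, ?_, ?_, ?_⟩
  · rw [bm K [] (by decide +kernel), bsum_nil]
  · rw [bm K [25] (by decide +kernel), bsum_single]
  · rw [bm K [25] (by decide +kernel), bsum_single]
  · rw [bm K [16, 17] (by decide +kernel), bsum_cons, bsum_single]
  · rw [bm K [27] (by decide +kernel), bsum_single]
  · rw [bm K [27] (by decide +kernel), bsum_single]

lemma tt_cob (h : P1 K →ₗ[RR K] AA K) : tt K (h.comp (d2 K)) = 0 := by
  obtain ⟨c0, c1, c2, c3⟩ := cob K h (fun j => h (G1 K j)) (fun j => rfl)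
  rw [tt_apply]
  simp only [LinearMap.comp_apply, d2_G0]
  rw [c0, c1, c2, c3]
  obtain ⟨p1, p2, p3, p4, p5, p6⟩ := mt1 K
  obtain ⟨q1, q2, q3, q4, q5, q6⟩ := mt2 K
  obtain ⟨r1, r2, r3, r4, r5, r6⟩ := mt3 K
  have n0 := n_eq K h 0 4 18 (by decide) (by decide +kernel)
  have n1 := n_eq K h 1 5 21 (by decide) (by decide +kernel)
  have n2 := n_eq K h 2 6 19 (by decide) (by decide +kernel)
  have n3 := n_eq K h 3 7 22 (by decide) (by decide +kernel)
  have n4 := n_eq K h 4 8 23 (by decide) (by decide +kernel)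
  have n5 := n_eq K h 5 9 20 (by decide) (by decide +kernel)
  revert n0 n1 n2 n3 n4 n5
  generalize phi K (h (G1 K 0)) 4 = x0
  generalize phi K (h (G1 K 0)) 18 = y0
  generalize phi K (h (G1 K 1)) 5 = x1
  generalize phi K (h (G1 K 1)) 21 = y1
  generalize phi K (h (G1 K 2)) 6 = x2
  generalize phi K (h (G1 K 2)) 19 = y2
  generalize phi K (h (G1 K 3)) 7 = x3
  generalize phi K (h (G1 K 3)) 22 = y3
  generalize phi K (h (G1 K 4)) 8 = x4
  generalize phi K (h (G1 K 4)) 23 = y4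
  generalize phi K (h (G1 K 5)) 9 = x5
  generalize phi K (h (G1 K 5)) 20 = y5
  intro n0 n1 n2 n3 n4 n5
  simp only [n0, n1, n2, n3, n4, n5, mul_add, add_mul, mul_smul_comm, smul_mul_assoc, p1, p2, p3, p4,
    p5, p6, q1, q2, q3, q4, q5, q6, r1, r2, r3, r4, r5, r6, map_add, map_smul, phi_b, smul_zero,
    map_zero, smul_add]
  funext i
  have e2 : (2 : K) = 0 := CharTwo.two_eq_zero
  fin_cases i
  · simp
  · simp
  · simp
    linear_combination (y0 + y1 + y2 + y3 + y4 + y5) * e2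

lemma tt_zero (f : P0 K →ₗ[RR K] AA K) (hf : ∀ x, d2 K x = 0 → f x = 0) (ht : tt K f = 0) :
    ∃ h : P1 K →ₗ[RR K] AA K, h.comp (d2 K) = f := by
  obtain ⟨k1, k2⟩ := (kills_iff K f).1 hf
  rw [tt_apply] at ht
  have t0 := congrFun ht 0
  have t1 := congrFun ht 1
  have t2 := congrFun ht 2
  simp at t0 t1 t2
  have m0 := m0_eq K f
  have m1 := m1_eq K f
  have m2 := m2_eq K f
  have m3 := m3_eq K f
  rw [← k1, t0, zero_smul, zero_add] at m1
  rw [← k2, t0, zero_smul, zero_add] at m2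
  rw [t0, zero_smul, zero_add] at m0
  rw [t1, zero_smul, zero_add] at m3
  clear k1 k2 t0 t1 ht
  revert m0 m1 m2 m3 t2
  generalize phi K (f (G0 K 0)) 24 = x0
  generalize phi K (f (G0 K 1)) 25 = x1
  generalize phi K (f (G0 K 2)) 26 = x2
  generalize phi K (f (G0 K 3)) 27 = x3
  generalize phi K (f (G0 K 3)) 16 = y
  generalize phi K (f (G0 K 3)) 17 = z
  intro t2 m0 m1 m2 m3
  obtain ⟨p1, p2, p3, p4, p5, p6⟩ := mt1 K
  obtain ⟨q1, q2, q3, q4, q5, q6⟩ := mt2 K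
  obtain ⟨r1, r2, r3, r4, r5, r6⟩ := mt3 K
  have hx : x3 = x0 + x1 + x2 := (CharTwo.add_eq_zero.1 t2).symm
  let n : Fin 6 → AA K := ![x0 • b K 18 + y • b K 4, 0, x2 • b K 19 + z • b K 6, 0, 0, x1 • b K 20]
  have hn : ∀ j, PMlift (u1 K) n (G1 K j) = n j := by
    intro j
    rw [lift_G1]
    fin_cases j
    · change ev K 0 * (x0 • b K 18 + y • b K 4) * ev K 3 = x0 • b K 18 + y • b K 4
      rw [mul_add, add_mul, mul_smul_comm, mul_smul_comm, smul_mul_assoc, smul_mul_assoc,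
        ev_b_ev K 0 3 18 rfl rfl, ev_b_ev K 0 3 4 rfl rfl]
    · change ev K _ * 0 * ev K _ = 0
      rw [mul_zero, zero_mul]
    · change ev K 2 * (x2 • b K 19 + z • b K 6) * ev K 3 = x2 • b K 19 + z • b K 6
      rw [mul_add, add_mul, mul_smul_comm, mul_smul_comm, smul_mul_assoc, smul_mul_assoc,
        ev_b_ev K 2 3 19 rfl rfl, ev_b_ev K 2 3 6 rfl rfl]
    · change ev K _ * 0 * ev K _ = 0
      rw [mul_zero, zero_mul]
    · change ev K _ * 0 * ev K _ = 0
      rw [mul_zero, zero_mul]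
    · change ev K 1 * (x1 • b K 20) * ev K 3 = x1 • b K 20
      rw [mul_smul_comm, smul_mul_assoc, ev_b_ev K 1 3 20 rfl rfl]
  obtain ⟨c0, c1, c2, c3⟩ := cob K (PMlift (u1 K) n) n hn
  change _ = b K 4 * 0 + (x0 • b K 18 + y • b K 4) * b K 5 at c0
  change _ = b K 9 * 0 + (x1 • b K 20) * b K 8 at c1
  change _ = b K 6 * 0 + (x2 • b K 19 + z • b K 6) * b K 7 at c2
  change _ = (b K 5 * (x0 • b K 18 + y • b K 4) + 0 * b K 4) +
    (b K 7 * (x2 • b K 19 + z • b K 6) + 0 * b K 6) + (b K 8 * (x1 • b K 20) + 0 * b K 9) at c3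
  refine ⟨PMlift (u1 K) n, P0_hom_ext K _ _ fun i => ?_⟩
  rw [LinearMap.comp_apply, d2_G0]
  fin_cases i
  · refine c0.trans (Eq.trans ?_ m0.symm)
    simp [add_mul, p1, p3]
  · refine c1.trans (Eq.trans ?_ m1.symm)
    simp [r3]
  · refine c2.trans (Eq.trans ?_ m2.symm)
    simp [add_mul, q1, q3]
  · refine c3.trans (Eq.trans ?_ m3.symm)
    simp only [mul_add, mul_smul_comm, p4, p5, q4, q5, r5, zero_mul, hx, add_smul]
    abel

theorem finrank_ext : Module.finrank K (((Ext K (ModuleCat (RR K)) 2).obj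
    (Opposite.op (ModuleCat.of (RR K) (AA K)))).obj (ModuleCat.of (RR K) (AA K))) = 3 := by
  haveI : Module.Projective (RR K) (P0 K) := PM_proj (u0 K) (hu0 K)
  haveI : Module.Projective (RR K) (P1 K) := PM_proj (u1 K) (hu1 K)
  rw [ext2_finrank_mod (K := K) (pmap K) (d1 K) (d2 K) (pmap_surj K) (exact_P0 K) (exact_P1 K)
    (tt K) (tt_smul K) (tt_surj K) ?_]
  · simp
  · intro f hf
    constructor
    · exact tt_zero K f hf
    · rintro ⟨h, rfl⟩
      exact tt_cob K h

end

/-- For the preprojective algebra `A₁ = KQ/I′` of type `D₄` over an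
algebraically closed field `K` of characteristic `2`, the second Hochschild cohomology
group `HH²(A₁)` is a `K`-vector space of dimension `3`. -/
theorem finrank_HH2_A1 (K : Type) [Field K] [IsAlgClosed K] [CharP K 2] :
    Module.finrank K (HH2 K (AlgA1 K)) = 3 := by
  exact finrank_ext K
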